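/- Fix real κ > 0 and η > 0. For every a ∈ (0, 1/2) and every M > 20 there exist f₀ > 0 and C > 0 such that for all f ∈ (0, f₀) and every z = re^{iθ} with r > f^a and r^{−3/2}·M·f·log(f⁻¹ + r) < θ < 4π/3 − (1 + r^{−1/2})·r⁻¹·M·f·log(f⁻¹ + r), one has |D_f(z) − F₂(z)| ≤ C·f²·r^{−5/2}·(1 + r^{−3/2}), where F₂(z) = ((2η·z^{1/2} + i)² + e^{4iκ·z^{1/2}})/(4zη²) is evaluated with the branch z^{1/2} = r^{1/2}e^{iθ/2} (log denotes the natural logarithm). -/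

import Mathlib

open Real

/-- Taylor coefficients of the Airy function `Ai`:
`a₀ = 3^{−2/3}/Γ(2/3)`, `a₁ = −3^{−1/3}/Γ(1/3)`, `a₂ = 0`,
`a_{k+3} = a_k/((k+3)(k+2))`. -/
noncomputable def airyCoeff : ℕ → ℂ
  | 0 => (3 : ℂ) ^ (-(2 : ℂ) / 3) / Complex.Gamma (2 / 3)
  | 1 => -((3 : ℂ) ^ (-(1 : ℂ) / 3) / Complex.Gamma (1 / 3))
  | 2 => 0
  | (k + 3) => airyCoeff k / (((k : ℂ) + 3) * ((k : ℂ) + 2))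

/-- The Airy function `Ai`, as the entire function with the above Taylor
coefficients at `0`. -/
noncomputable def Ai (z : ℂ) : ℂ := ∑' k : ℕ, airyCoeff k * z ^ k

/-- `ω = e^{2πi/3}` -/
noncomputable def ωc : ℂ := Complex.exp (2 * π * Complex.I / 3)

/-- `W = f^{1/3}·e^{−iπ/6}/(2π)` -/
noncomputable def Wf (f : ℝ) : ℂ :=
  ((f ^ ((1 : ℝ) / 3) : ℝ) : ℂ) * Complex.exp (-(π : ℂ) * Complex.I / 6) / (2 * π)

/-- `α₊(z) = Ai(−ω(z − κf)f^{−2/3})·Ai(−(z − κf)f^{−2/3})` -/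
noncomputable def alphaP (κ f : ℝ) (z : ℂ) : ℂ :=
  Ai (-ωc * (z - κ * f) * ((f ^ (-(2 : ℝ) / 3) : ℝ) : ℂ)) *
    Ai (-(z - κ * f) * ((f ^ (-(2 : ℝ) / 3) : ℝ) : ℂ))

/-- `α₋(z) = Ai(−ω(z + κf)f^{−2/3})·Ai(−(z + κf)f^{−2/3})` -/
noncomputable def alphaM (κ f : ℝ) (z : ℂ) : ℂ :=
  Ai (-ωc * (z + κ * f) * ((f ^ (-(2 : ℝ) / 3) : ℝ) : ℂ)) *
    Ai (-(z + κ * f) * ((f ^ (-(2 : ℝ) / 3) : ℝ) : ℂ))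

/-- `β₊(z) = Ai(−ω(z + κf)f^{−2/3})·Ai(−(z − κf)f^{−2/3})` -/
noncomputable def betaP (κ f : ℝ) (z : ℂ) : ℂ :=
  Ai (-ωc * (z + κ * f) * ((f ^ (-(2 : ℝ) / 3) : ℝ) : ℂ)) *
    Ai (-(z - κ * f) * ((f ^ (-(2 : ℝ) / 3) : ℝ) : ℂ))

/-- `β₋(z) = Ai(−ω(z − κf)f^{−2/3})·Ai(−(z + κf)f^{−2/3})` -/
noncomputable def betaM (κ f : ℝ) (z : ℂ) : ℂ :=
  Ai (-ωc * (z - κ * f) * ((f ^ (-(2 : ℝ) / 3) : ℝ) : ℂ)) *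
    Ai (-(z + κ * f) * ((f ^ (-(2 : ℝ) / 3) : ℝ) : ℂ))

/-- The resonance determinant `D_f` of the Stark Hamiltonian
`p² + fx + η⁻¹(δ_κ + δ_{−κ})`:
`D_f(z) = 1 + (α₊ + α₋)/(ηW) + β₊(β₋ − β₊)/(η²W²)`. -/
noncomputable def Df (κ η f : ℝ) (z : ℂ) : ℂ :=
  1 + (alphaP κ f z + alphaM κ f z) / (η * Wf f)
    + betaP κ f z * (betaM κ f z - betaP κ f z) / (η ^ 2 * (Wf f) ^ 2)

/-!
Rotating the contour of the Airy integral onto a ray through the saddle point gives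
`Ai(e^{2ℓ}) = e^{-2e^{3ℓ}/3 - ℓ/2} (1 - 5/48 e^{-3ℓ} + O(e^{-6ℓ})) / (2√π)` for `|Im ℓ| ≤ π/3`. The
connection formula `Ai(x) + ω Ai(ωx) + ω² Ai(ω²x) = 0` carries the expansion on towards the negative
axis, as long as the second exponential it introduces is `O(e^{-6ℓ})`; the logarithmic distance to
the critical rays ensures exactly this for all the Airy functions in `D_f(z)`. In each product
`Ai(-ω·) Ai(-·)` the first order corrections are `∓5i/48 · f z^{-3/2}` and cancel, while the shifts
`±κf` enter symmetrically, so that `D_f - F₂` is of second order in `f`.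
-/

section ExponentialMoments

open MeasureTheory Set Filter Topology

lemma integrableOn_pow_mul_exp_neg_mul_pow (k : ℕ) {m : ℕ} (hm : m ≠ 0) {δ : ℝ} (hδ : 0 < δ) :
    IntegrableOn (fun u : ℝ => u ^ k * Real.exp (-δ * u ^ m)) (Ioi 0) := by
  have h := integrableOn_rpow_mul_exp_neg_mul_rpow (p := m) (s := k) (b := δ)
    (lt_of_lt_of_le (by norm_num) (Nat.cast_nonneg k)) (by exact_mod_cast hm.bot_lt) hδ
  refine h.congr_fun (fun u _ => ?_) measurableSet_Ioi
  simp only [Real.rpow_natCast]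

lemma norm_pow_mul_cexp_neg_mul_pow (k m : ℕ) (b : ℂ) {u : ℝ} (hu : 0 ≤ u) :
    ‖(u : ℂ) ^ k * Complex.exp (-b * (u : ℂ) ^ m)‖ = u ^ k * Real.exp (-b.re * u ^ m) := by
  rw [norm_mul, norm_pow, Complex.norm_of_nonneg hu, Complex.norm_exp, ← Complex.ofReal_pow,
    Complex.re_mul_ofReal, Complex.neg_re]

lemma integrableOn_pow_mul_cexp_neg_mul_pow (k : ℕ) {m : ℕ} (hm : m ≠ 0) {b : ℂ}
    (hb : 0 < b.re) :
    IntegrableOn (fun u : ℝ => (u : ℂ) ^ k * Complex.exp (-b * (u : ℂ) ^ m)) (Ioi 0) := by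
  refine Integrable.mono' (integrableOn_pow_mul_exp_neg_mul_pow k hm hb) (by fun_prop) ?_
  filter_upwards [ae_restrict_mem measurableSet_Ioi] with u hu
  exact (norm_pow_mul_cexp_neg_mul_pow k m b (mem_Ioi.1 hu).le).le

lemma differentiableAt_integral_pow_mul_cexp_neg_mul_pow (k : ℕ) {m : ℕ} (hm : m ≠ 0) {b : ℂ}
    (hb : 0 < b.re) :
    DifferentiableAt ℂ
      (fun b : ℂ => ∫ u in Ioi (0 : ℝ), (u : ℂ) ^ k * Complex.exp (-b * (u : ℂ) ^ m)) b := by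
  refine (hasDerivAt_integral_of_dominated_loc_of_deriv_le
    (μ := volume.restrict (Ioi (0 : ℝ))) (s := {c : ℂ | b.re / 2 < c.re})
    (F := fun c (u : ℝ) => (u : ℂ) ^ k * Complex.exp (-c * (u : ℂ) ^ m))
    (F' := fun c (u : ℝ) => -((u : ℂ) ^ (k + m) * Complex.exp (-c * (u : ℂ) ^ m)))
    ((isOpen_lt continuous_const Complex.continuous_re).mem_nhds (half_lt_self hb))
    (Eventually.of_forall fun c => by fun_prop)
    (integrableOn_pow_mul_cexp_neg_mul_pow k hm hb) (by fun_prop) ?_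
    (integrableOn_pow_mul_exp_neg_mul_pow (k + m) hm (half_pos hb)) ?_).2.differentiableAt
  · filter_upwards [ae_restrict_mem measurableSet_Ioi] with u hu c hc
    have hu0 : 0 ≤ u := (mem_Ioi.1 hu).le
    rw [norm_neg, norm_pow_mul_cexp_neg_mul_pow _ m c hu0]
    gcongr
  · refine Eventually.of_forall fun u c _ => ?_
    refine ((((hasDerivAt_id c).neg.mul_const ((u : ℂ) ^ m)).cexp).const_mul
      ((u : ℂ) ^ k)).congr_deriv ?_
    simp only [Pi.neg_apply, id_eq]
    ring

lemma cexp_re_pos {β : ℂ} (hβ : |β.im| < π / 2) : 0 < (Complex.exp β).re := by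
  rw [Complex.exp_re]
  exact mul_pos (Real.exp_pos _) (Real.cos_pos_of_mem_Ioo (abs_lt.1 hβ))

lemma integral_pow_mul_exp_neg_exp_mul_pow (k : ℕ) {m : ℕ} (hm : m ≠ 0) (t : ℝ) :
    ∫ u in Ioi (0 : ℝ), u ^ k * Real.exp (-Real.exp t * u ^ m) =
      1 / m * (Real.exp (-t * ((k + 1) / m)) * Real.Gamma ((k + 1) / m)) := by
  have h := integral_rpow_mul_exp_neg_mul_rpow (p := m) (q := k) (b := Real.exp t)
    (by exact_mod_cast hm.bot_lt) (lt_of_lt_of_le (by norm_num) (Nat.cast_nonneg k))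
    (Real.exp_pos t)
  simp only [Real.rpow_natCast] at h
  rw [h, ← Real.exp_mul, neg_div, mul_neg, neg_mul]
  ring

/-- The identity theorem extends the real Gamma integral to complex logarithms. -/
theorem integral_pow_mul_cexp_neg_cexp_mul_pow (k : ℕ) {m : ℕ} (hm : m ≠ 0) {β : ℂ}
    (hβ : |β.im| < π / 2) :
    ∫ u in Ioi (0 : ℝ), (u : ℂ) ^ k * Complex.exp (-Complex.exp β * (u : ℂ) ^ m) =
      1 / m * (Complex.exp (-β * ((k + 1) / m)) * Complex.Gamma ((k + 1) / m)) := by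
  set S : Set ℂ := Complex.im ⁻¹' Ioo (-(π / 2)) (π / 2)
  have hSo : IsOpen S := isOpen_Ioo.preimage Complex.continuous_im
  have hSc : IsPreconnected S :=
    ((convex_Ioo _ _).linear_preimage Complex.imLm).isPreconnected
  have hint : AnalyticOnNhd ℂ (fun β => ∫ u in Ioi (0 : ℝ), (u : ℂ) ^ k *
      Complex.exp (-Complex.exp β * (u : ℂ) ^ m)) S := DifferentiableOn.analyticOnNhd
    (fun γ hγ => ((differentiableAt_integral_pow_mul_cexp_neg_mul_pow k hm
      (cexp_re_pos (abs_lt.2 hγ))).comp γ Complex.differentiableAt_exp).differentiableWithinAt) hSo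
  have hgam : AnalyticOnNhd ℂ (fun β => 1 / m * (Complex.exp (-β * ((k + 1) / m)) *
      Complex.Gamma ((k + 1) / m))) S := DifferentiableOn.analyticOnNhd (by fun_prop) hSo
  have hreal : Tendsto (fun t : ℝ => (t : ℂ)) (𝓝[≠] 0) (𝓝[≠] 0) :=
    (Complex.continuous_ofReal.tendsto' 0 0 Complex.ofReal_zero).inf
      (tendsto_principal_principal.2 fun t ht => Complex.ofReal_ne_zero.2 ht)
  refine hint.eqOn_of_preconnected_of_frequently_eq hgam hSc (z₀ := 0)
    (by simp [S, Real.pi_pos]) (hreal.frequently (Eventually.frequently ?_)) (abs_lt.1 hβ)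
  refine Eventually.of_forall fun t => ?_
  have h := congrArg ((↑) : ℝ → ℂ) (integral_pow_mul_exp_neg_exp_mul_pow k hm t)
  rw [← integral_complex_ofReal] at h
  push_cast [← Complex.Gamma_ofReal] at h
  exact h

end ExponentialMoments

section AiryRay

open MeasureTheory Set Filter Topology

lemma exists_add_mul_sq_le_add_mul_cube (A B : ℝ) {δ : ℝ} (hδ : 0 < δ) :
    ∃ K : ℝ, ∀ u : ℝ, 0 ≤ u → A * u + B * u ^ 2 ≤ K + δ * u ^ 3 := by
  set c := |A| + |B|
  refine ⟨c + c * (c / δ) ^ 2, fun u hu => ?_⟩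
  have hquad : A * u + B * u ^ 2 ≤ c + c * u ^ 2 := by
    have hA : A * u ≤ |A| * (1 + u ^ 2) := by
      refine mul_le_mul (le_abs_self A) ?_ hu (abs_nonneg A)
      nlinarith [sq_nonneg (u - 1)]
    have hB : B * u ^ 2 ≤ |B| * u ^ 2 := by gcongr; exact le_abs_self B
    have := abs_nonneg B
    simp only [c]
    linarith
  have hcubic : c * u ^ 2 ≤ c * (c / δ) ^ 2 + δ * u ^ 3 := by
    rcases le_total u (c / δ) with h | h
    · have : c * u ^ 2 ≤ c * (c / δ) ^ 2 := by gcongr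
      have : 0 ≤ δ * u ^ 3 := by positivity
      linarith
    · rw [div_le_iff₀ hδ] at h
      have : c * u ^ 2 ≤ u * δ * u ^ 2 := by gcongr
      have : 0 ≤ c * (c / δ) ^ 2 := by positivity
      linarith
  linarith

/-- The integral of `exp(t³/3 - xt)` along the ray issuing from `c` in the direction `d`; the
Airy function is a difference of two such integrals. -/
noncomputable def airyRay (d x c : ℂ) : ℂ :=
  ∫ u in Ioi (0 : ℝ), d * Complex.exp ((c + d * u) ^ 3 / 3 - x * (c + d * u))

lemma exists_norm_airyRay_integrand_le {d : ℂ} (hd : (d ^ 3).re < 0) (x : ℂ) (R : ℝ) :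
    ∃ K > 0, ∃ δ > 0, ∀ c : ℂ, ‖c‖ ≤ R → ∀ u : ℝ, 0 ≤ u →
      ‖Complex.exp ((c + d * u) ^ 3 / 3 - x * (c + d * u))‖ ≤ K * Real.exp (-δ * u ^ 3) := by
  have hδ : 0 < -(d ^ 3).re / 6 := by linarith
  obtain ⟨K, hK⟩ := exists_add_mul_sq_le_add_mul_cube
    (R ^ 2 * ‖d‖ + ‖x‖ * ‖d‖) (R * ‖d‖ ^ 2) hδ
  refine ⟨Real.exp (R ^ 3 / 3 + ‖x‖ * R + K), Real.exp_pos _, _, hδ, fun c hc u hu => ?_⟩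
  rw [Complex.norm_exp, ← Real.exp_add]
  refine Real.exp_le_exp.2 ?_
  have expand : (c + d * u) ^ 3 / 3 - x * (c + d * u) = (c ^ 3 / 3 - x * c) +
      (c ^ 2 * d - x * d) * u + c * d ^ 2 * ((u ^ 2 : ℝ) : ℂ) + d ^ 3 * ((u ^ 3 / 3 : ℝ) : ℂ) := by
    push_cast
    ring
  have h₀ : (c ^ 3 / 3 - x * c).re ≤ R ^ 3 / 3 + ‖x‖ * R := by
    refine (Complex.re_le_norm _).trans ((norm_sub_le _ _).trans ?_)
    rw [norm_div, norm_pow, norm_mul, Complex.norm_ofNat]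
    gcongr
  have h₁ : (c ^ 2 * d - x * d).re ≤ R ^ 2 * ‖d‖ + ‖x‖ * ‖d‖ := by
    refine (Complex.re_le_norm _).trans ((norm_sub_le _ _).trans ?_)
    rw [norm_mul, norm_mul, norm_pow]
    gcongr
  have h₂ : (c * d ^ 2).re ≤ R * ‖d‖ ^ 2 := by
    refine (Complex.re_le_norm _).trans ?_
    rw [norm_mul, norm_pow]
    gcongr
  rw [expand]
  simp only [Complex.add_re, Complex.re_mul_ofReal]
  linarith [hK u hu, mul_le_mul_of_nonneg_right h₁ hu,
    mul_le_mul_of_nonneg_right h₂ (sq_nonneg u)]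

lemma integrableOn_airyRay {d : ℂ} (hd : (d ^ 3).re < 0) (x c : ℂ) :
    IntegrableOn (fun u : ℝ => Complex.exp ((c + d * u) ^ 3 / 3 - x * (c + d * u))) (Ioi 0) := by
  obtain ⟨K, -, δ, hδ, hle⟩ := exists_norm_airyRay_integrand_le hd x ‖c‖
  have hint := (integrableOn_pow_mul_exp_neg_mul_pow 0 three_ne_zero hδ).const_mul K
  simp only [pow_zero, one_mul] at hint
  refine hint.mono' (by fun_prop) ?_
  filter_upwards [ae_restrict_mem measurableSet_Ioi] with u hu
  exact hle c le_rfl u (mem_Ioi.1 hu).le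

lemma tendsto_airyRay_integrand {d : ℂ} (hd : (d ^ 3).re < 0) (x c : ℂ) :
    Tendsto (fun u : ℝ => Complex.exp ((c + d * u) ^ 3 / 3 - x * (c + d * u))) atTop (𝓝 0) := by
  obtain ⟨K, -, δ, hδ, hle⟩ := exists_norm_airyRay_integrand_le hd x ‖c‖
  have hdecay : Tendsto (fun u : ℝ => K * Real.exp (-δ * u ^ 3)) atTop (𝓝 0) := by
    rw [← mul_zero K]
    exact (Real.tendsto_exp_atBot.comp ((tendsto_pow_atTop three_ne_zero).const_mul_atTop_of_neg
      (neg_neg_of_pos hδ))).const_mul K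
  refine squeeze_zero_norm' ?_ hdecay
  filter_upwards [eventually_ge_atTop 0] with u hu using hle c le_rfl u hu

lemma hasDerivAt_cexp_cube_sub (x t : ℂ) :
    HasDerivAt (fun t : ℂ => Complex.exp (t ^ 3 / 3 - x * t))
      (Complex.exp (t ^ 3 / 3 - x * t) * (t ^ 2 - x)) t := by
  refine ((((hasDerivAt_pow 3 t).div_const 3).sub
    ((hasDerivAt_id t).const_mul x)).cexp).congr_deriv ?_
  simp only [Pi.sub_apply, id_eq]
  push_cast
  ring

lemma integral_deriv_airyRay_integrand {d : ℂ} (hd : (d ^ 3).re < 0) {x c : ℂ}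
    (hint : IntegrableOn (fun u : ℝ => d * (Complex.exp ((c + d * u) ^ 3 / 3 - x * (c + d * u)) *
      ((c + d * u) ^ 2 - x))) (Ioi 0)) :
    ∫ u in Ioi (0 : ℝ), d * (Complex.exp ((c + d * u) ^ 3 / 3 - x * (c + d * u)) *
      ((c + d * u) ^ 2 - x)) = -Complex.exp (c ^ 3 / 3 - x * c) := by
  have hderiv : ∀ u : ℝ, HasDerivAt
      (fun u : ℝ => Complex.exp ((c + d * u) ^ 3 / 3 - x * (c + d * u)))
      (d * (Complex.exp ((c + d * u) ^ 3 / 3 - x * (c + d * u)) * ((c + d * u) ^ 2 - x))) u := by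
    intro u
    have hline : HasDerivAt (fun u : ℝ => c + d * (u : ℂ)) (d * 1) u :=
      (Complex.ofRealCLM.hasDerivAt.const_mul d).const_add c
    exact ((hasDerivAt_cexp_cube_sub x _).comp u hline).congr_deriv (by ring)
  rw [integral_Ioi_of_hasDerivAt_of_tendsto' (fun u _ => hderiv u) hint
    (tendsto_airyRay_integrand hd x c)]
  simp only [Complex.ofReal_zero, mul_zero, add_zero, zero_sub]

lemma hasDerivAt_airyRay {d : ℂ} (hd : (d ^ 3).re < 0) (x c : ℂ) :
    HasDerivAt (airyRay d x) (-Complex.exp (c ^ 3 / 3 - x * c)) c := by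
  set R := ‖c‖ + 1
  obtain ⟨K, hK, δ, hδ, hle⟩ := exists_norm_airyRay_integrand_le hd x R
  have hmoment := fun k => integrableOn_pow_mul_exp_neg_mul_pow k three_ne_zero hδ
  have key := hasDerivAt_integral_of_dominated_loc_of_deriv_le (𝕜 := ℂ)
    (μ := volume.restrict (Ioi (0 : ℝ))) (x₀ := c) (s := Metric.ball c 1)
    (F := fun c (u : ℝ) => d * Complex.exp ((c + d * u) ^ 3 / 3 - x * (c + d * u)))
    (F' := fun c (u : ℝ) => d * (Complex.exp ((c + d * u) ^ 3 / 3 - x * (c + d * u)) *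
      ((c + d * u) ^ 2 - x)))
    (bound := fun u => ‖d‖ * K * ((R ^ 2 + ‖x‖) * (u ^ 0 * Real.exp (-δ * u ^ 3)) +
      2 * R * ‖d‖ * (u ^ 1 * Real.exp (-δ * u ^ 3)) +
      ‖d‖ ^ 2 * (u ^ 2 * Real.exp (-δ * u ^ 3))))
    (Metric.ball_mem_nhds c one_pos) (Eventually.of_forall fun γ => by fun_prop)
    ((integrableOn_airyRay hd x c).const_mul d) (by fun_prop) ?_
    (((((hmoment 0).const_mul _).add ((hmoment 1).const_mul _)).add
      ((hmoment 2).const_mul _)).const_mul _) ?_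
  · exact key.2.congr_deriv (integral_deriv_airyRay_integrand hd key.1)
  · filter_upwards [ae_restrict_mem measurableSet_Ioi] with u hu γ hγ
    have hu0 : 0 ≤ u := (mem_Ioi.1 hu).le
    have hγR : ‖γ‖ ≤ R := by
      have := norm_lt_of_mem_ball hγ
      linarith
    have hpoly : ‖(γ + d * u) ^ 2 - x‖ ≤ (R + ‖d‖ * u) ^ 2 + ‖x‖ := by
      refine (norm_sub_le _ _).trans ?_
      rw [norm_pow]
      gcongr
      refine (norm_add_le _ _).trans ?_
      rw [norm_mul, Complex.norm_of_nonneg hu0]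
      gcongr
    rw [norm_mul, norm_mul]
    calc _ ≤ ‖d‖ * (K * Real.exp (-δ * u ^ 3) * ((R + ‖d‖ * u) ^ 2 + ‖x‖)) := by
          gcongr
          exact hle γ hγR u hu0
      _ = _ := by ring
  · refine Eventually.of_forall fun u γ _ => ?_
    have hline : HasDerivAt (fun γ : ℂ => γ + d * (u : ℂ)) 1 γ := (hasDerivAt_id γ).add_const _
    exact (((hasDerivAt_cexp_cube_sub x _).comp γ hline).const_mul d).congr_deriv (by ring)

lemma airyRay_sub_airyRay {d e : ℂ} (hd : (d ^ 3).re < 0) (he : (e ^ 3).re < 0) (x c : ℂ) :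
    airyRay d x c - airyRay e x c = airyRay d x 0 - airyRay e x 0 := by
  have hderiv : ∀ c, HasDerivAt (fun c => airyRay d x c - airyRay e x c) 0 c := fun c =>
    ((hasDerivAt_airyRay hd x c).sub (hasDerivAt_airyRay he x c)).congr_deriv (sub_self _)
  exact is_const_of_deriv_eq_zero (fun c => (hderiv c).differentiableAt)
    (fun c => (hderiv c).deriv) c 0

lemma cexp_pow_mul_integral_pow_mul_cexp (k : ℕ) {m : ℕ} (hm : m ≠ 0) {β δ : ℂ}
    (h : |(β + m * δ).im| < π / 2) :
    Complex.exp δ ^ (k + 1) * ∫ u in Ioi (0 : ℝ),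
        (u : ℂ) ^ k * Complex.exp (-(Complex.exp β * Complex.exp δ ^ m) * (u : ℂ) ^ m) =
      1 / m * (Complex.exp (-β * ((k + 1) / m)) * Complex.Gamma ((k + 1) / m)) := by
  have hmC : (m : ℂ) ≠ 0 := by exact_mod_cast hm
  have hexp : Complex.exp δ ^ (k + 1) * Complex.exp (-(β + m * δ) * ((k + 1) / m)) =
      Complex.exp (-β * ((k + 1) / m)) := by
    rw [← Complex.exp_nat_mul, ← Complex.exp_add]
    congr 1
    push_cast
    field_simp
    ring
  rw [← Complex.exp_nat_mul δ m, ← Complex.exp_add β,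
    integral_pow_mul_cexp_neg_cexp_mul_pow k hm h, ← hexp]
  ring

lemma integrableOn_exp_mul_exp_neg_mul_cube (a : ℝ) {δ : ℝ} (hδ : 0 < δ) :
    IntegrableOn (fun u : ℝ => Real.exp (a * u) * Real.exp (-δ * u ^ 3)) (Ioi 0) := by
  obtain ⟨K, hK⟩ := exists_add_mul_sq_le_add_mul_cube a 0 (half_pos hδ)
  refine ((integrableOn_pow_mul_exp_neg_mul_pow 0 three_ne_zero (half_pos hδ)).const_mul
    (Real.exp K)).mono' (by fun_prop) ?_
  filter_upwards [ae_restrict_mem measurableSet_Ioi] with u hu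
  rw [Real.norm_of_nonneg (by positivity), pow_zero, one_mul, ← Real.exp_add, ← Real.exp_add]
  refine Real.exp_le_exp.2 ?_
  linarith [hK u (mem_Ioi.1 hu).le]

lemma hasSum_integral_cexp_mul_cexp_cube (w : ℂ) {b : ℂ} (hb : 0 < b.re) :
    HasSum (fun k : ℕ => w ^ k / (k.factorial : ℂ) *
        ∫ u in Ioi (0 : ℝ), (u : ℂ) ^ k * Complex.exp (-b * (u : ℂ) ^ 3))
      (∫ u in Ioi (0 : ℝ), Complex.exp (w * u) * Complex.exp (-b * (u : ℂ) ^ 3)) := by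
  have hreal : ∀ u : ℝ, HasSum (fun k : ℕ => (‖w‖ * u) ^ k / k.factorial *
      Real.exp (-b.re * u ^ 3)) (Real.exp (‖w‖ * u) * Real.exp (-b.re * u ^ 3)) := fun u => by
    rw [Real.exp_eq_exp_ℝ]
    exact (NormedSpace.expSeries_div_hasSum_exp (‖w‖ * u)).mul_right _
  have hcomplex : ∀ u : ℝ, HasSum (fun k : ℕ => w ^ k / (k.factorial : ℂ) *
      ((u : ℂ) ^ k * Complex.exp (-b * (u : ℂ) ^ 3)))
      (Complex.exp (w * u) * Complex.exp (-b * (u : ℂ) ^ 3)) := fun u => by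
    rw [Complex.exp_eq_exp_ℂ]
    refine ((NormedSpace.expSeries_div_hasSum_exp (w * u)).mul_right _).congr_fun fun k => ?_
    rw [mul_pow]
    ring
  have hbound : ∀ k : ℕ, ∀ᵐ u : ℝ ∂volume.restrict (Ioi 0), ‖w ^ k / (k.factorial : ℂ) *
      ((u : ℂ) ^ k * Complex.exp (-b * (u : ℂ) ^ 3))‖ ≤
      (‖w‖ * u) ^ k / k.factorial * Real.exp (-b.re * u ^ 3) := fun k => by
    filter_upwards [ae_restrict_mem measurableSet_Ioi] with u hu
    rw [norm_mul, norm_pow_mul_cexp_neg_mul_pow _ _ _ (mem_Ioi.1 hu).le, norm_div, norm_pow,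
      Complex.norm_natCast, mul_pow]
    exact le_of_eq (by ring)
  have hint : Integrable (fun u : ℝ => ∑' k : ℕ, (‖w‖ * u) ^ k / k.factorial *
      Real.exp (-b.re * u ^ 3)) (volume.restrict (Ioi 0)) := by
    simp only [fun u => (hreal u).tsum_eq]
    exact integrableOn_exp_mul_exp_neg_mul_cube ‖w‖ hb
  refine (hasSum_integral_of_dominated_convergence _ (fun k => by fun_prop) hbound
    (Eventually.of_forall fun u => (hreal u).summable) hint
    (Eventually.of_forall hcomplex)).congr_fun fun k => ?_
  exact (integral_const_mul _ _).symm

lemma hasSum_airyRay_zero {d : ℂ} (hd : (d ^ 3).re < 0) (x : ℂ) :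
    HasSum (fun k : ℕ => (-x) ^ k / (k.factorial : ℂ) * (d ^ (k + 1) *
      ∫ u in Ioi (0 : ℝ), (u : ℂ) ^ k * Complex.exp (-(-1 / 3 * d ^ 3) * (u : ℂ) ^ 3)))
      (airyRay d x 0) := by
  have hb : 0 < (-1 / 3 * d ^ 3).re := by
    rw [show (-1 / 3 * d ^ 3) = ((-1 / 3 : ℝ) : ℂ) * d ^ 3 by push_cast; rfl,
      Complex.re_ofReal_mul]
    linarith
  have h := (hasSum_integral_cexp_mul_cexp_cube (-x * d) hb).mul_left d
  rw [← integral_const_mul] at h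
  convert! h using 1
  · funext k
    rw [mul_pow]
    ring
  · rw [airyRay]
    refine integral_congr_ae (Eventually.of_forall fun u => ?_)
    simp only
    rw [← Complex.exp_add]
    ring_nf

end AiryRay

section AiryIntegral

open MeasureTheory Set Filter Topology

lemma inv_Gamma_one_sub {s : ℂ} (hs : 0 < s.re) :
    (Complex.Gamma (1 - s))⁻¹ = Complex.Gamma s * (Complex.sin (π * s) / π) := by
  rw [← inv_div, ← Complex.Gamma_mul_Gamma_one_sub, mul_inv,
    mul_inv_cancel_left₀ (Complex.Gamma_ne_zero_of_re_pos hs)]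

lemma airyCoeff_eq : ∀ k : ℕ, airyCoeff k =
    (-1) ^ k * (3 : ℂ) ^ ((k - 2) / 3 : ℂ) / k.factorial * (Complex.Gamma ((2 - k) / 3))⁻¹
  | 0 => by norm_num [airyCoeff, div_eq_mul_inv]
  | 1 => by norm_num [airyCoeff, div_eq_mul_inv]
  | 2 => by norm_num [airyCoeff]
  | k + 3 => by
    have hk : (k.factorial : ℂ) ≠ 0 := by exact_mod_cast k.factorial_ne_zero
    have hpow : (3 : ℂ) ^ (((k + 3 : ℕ) - 2) / 3 : ℂ) = 3 * (3 : ℂ) ^ ((k - 2) / 3 : ℂ) := by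
      rw [show (((k + 3 : ℕ) - 2) / 3 : ℂ) = 1 + (k - 2) / 3 by push_cast; ring,
        Complex.cpow_add _ _ three_ne_zero, Complex.cpow_one]
    have hGamma : (Complex.Gamma ((2 - (k + 3 : ℕ)) / 3))⁻¹ =
        -((k + 1) / 3) * (Complex.Gamma ((2 - k) / 3))⁻¹ := by
      rw [Complex.one_div_Gamma_eq_self_mul_one_div_Gamma_add_one]
      push_cast
      ring_nf
    have hk₁ : (k : ℂ) + 1 ≠ 0 := by exact_mod_cast k.succ_ne_zero
    have hk₂ : (k : ℂ) + 2 ≠ 0 := by exact_mod_cast (k + 1).succ_ne_zero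
    have hk₃ : (k : ℂ) + 3 ≠ 0 := by exact_mod_cast (k + 2).succ_ne_zero
    rw [airyCoeff, airyCoeff_eq k, hpow, hGamma]
    simp only [Nat.factorial_succ]
    push_cast
    rw [add_assoc (k : ℂ) 1 1, add_assoc (k : ℂ) 2 1, one_add_one_eq_two, two_add_one_eq_three]
    field_simp
    ring

/-- The directions `e^{±4πi/9}`, for the two signs `σ = ±1`. Any angle whose triple has negative
cosine would give the same integrals; this one also keeps `e^ℓ d²` in the left half-plane for
`|Im ℓ| ≤ π/3`, as the saddle point method requires. -/
noncomputable def airyDir (σ : ℝ) : ℂ := Complex.exp (σ * (4 * π / 9) * Complex.I)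

lemma cexp_neg_mul_pi_mul_I {σ : ℝ} (hσ : |σ| = 1) :
    Complex.exp (-(σ * π * Complex.I)) = -1 := by
  rcases eq_or_eq_neg_of_abs_eq hσ with rfl | rfl <;> simp [Complex.exp_neg]

lemma neg_airyDir_pow_three {σ : ℝ} (hσ : |σ| = 1) :
    -airyDir σ ^ 3 = Complex.exp ((σ * (π / 3) : ℝ) * Complex.I) := by
  rw [neg_eq_neg_one_mul, ← cexp_neg_mul_pi_mul_I hσ, airyDir, ← Complex.exp_nat_mul,
    ← Complex.exp_add]
  push_cast
  ring_nf

lemma airyDir_pow_three_re_neg {σ : ℝ} (hσ : |σ| = 1) : (airyDir σ ^ 3).re < 0 := by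
  rw [← neg_pos, ← Complex.neg_re, neg_airyDir_pow_three hσ]
  refine cexp_re_pos ?_
  rw [Complex.im_ofReal_mul, Complex.I_im, mul_one, abs_mul, hσ, abs_of_pos (by positivity)]
  linarith [Real.pi_pos]

lemma airyDir_pow_mul_integral_cube {σ : ℝ} (hσ : |σ| = 1) (k : ℕ) :
    airyDir σ ^ (k + 1) * ∫ u in Ioi (0 : ℝ),
        (u : ℂ) ^ k * Complex.exp (-(-1 / 3 * airyDir σ ^ 3) * (u : ℂ) ^ 3) =
      3 ^ ((k - 2) / 3 : ℂ) * Complex.Gamma ((k + 1) / 3) *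
        Complex.exp (σ * (π * ((k + 1) / 3) * Complex.I)) := by
  have hβ : Complex.exp (-Complex.log 3 - σ * π * Complex.I) = -1 / 3 := by
    rw [sub_eq_add_neg, Complex.exp_add, cexp_neg_mul_pi_mul_I hσ, Complex.exp_neg,
      Complex.exp_log three_ne_zero]
    norm_num
  have hδ : (-Complex.log 3 - σ * π * Complex.I) + (3 : ℕ) * (σ * (4 * π / 9) * Complex.I) =
      ((-Real.log 3 : ℝ) : ℂ) + ((σ * (π / 3) : ℝ) : ℂ) * Complex.I := by
    rw [← Complex.ofReal_ofNat 3, ← Complex.ofReal_log (by norm_num)]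
    push_cast
    ring
  have h := cexp_pow_mul_integral_pow_mul_cexp k three_ne_zero
    (β := -Complex.log 3 - σ * π * Complex.I) (δ := σ * (4 * π / 9) * Complex.I) (by
      rw [hδ, Complex.add_im, Complex.ofReal_im, zero_add, Complex.im_ofReal_mul, Complex.I_im,
        mul_one, abs_mul, hσ, abs_of_pos (by positivity)]
      linarith [Real.pi_pos])
  rw [hβ, ← airyDir] at h
  push_cast at h
  rw [h, Complex.cpow_def_of_ne_zero three_ne_zero,
    show -(-Complex.log 3 - σ * π * Complex.I) * ((k + 1) / 3) = Complex.log 3 +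
      Complex.log 3 * ((k - 2) / 3) + σ * (π * ((k + 1) / 3) * Complex.I) by ring,
    Complex.exp_add, Complex.exp_add, Complex.exp_log three_ne_zero]
  ring

theorem hasSum_airyCoeff_mul_pow (x : ℂ) : HasSum (fun k => airyCoeff k * x ^ k)
    ((airyRay (airyDir 1) x 0 - airyRay (airyDir (-1)) x 0) / (2 * π * Complex.I)) := by
  have h := ((hasSum_airyRay_zero (airyDir_pow_three_re_neg abs_one) x).sub
    (hasSum_airyRay_zero (airyDir_pow_three_re_neg (σ := -1) (by norm_num)) x)).div_const
    (2 * π * Complex.I)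
  refine h.congr_fun fun k => ?_
  have hs : 0 < (((k + 1) / 3 : ℂ)).re := by
    rw [show ((k + 1) / 3 : ℂ) = (((k + 1) / 3 : ℝ) : ℂ) by push_cast; rfl, Complex.ofReal_re]
    positivity
  rw [airyDir_pow_mul_integral_cube abs_one, airyDir_pow_mul_integral_cube (by norm_num),
    airyCoeff_eq, show ((2 - k) / 3 : ℂ) = 1 - (k + 1) / 3 by ring, inv_Gamma_one_sub hs,
    Complex.sin, neg_pow x]
  push_cast
  simp only [one_mul, neg_mul]
  have hpi : (π : ℂ) ≠ 0 := by exact_mod_cast Real.pi_ne_zero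
  have hI := Complex.I_ne_zero
  have hk : (k.factorial : ℂ) ≠ 0 := by exact_mod_cast k.factorial_ne_zero
  field_simp
  rw [Complex.I_sq]
  ring

theorem Ai_eq_airyRay_sub_airyRay (x c : ℂ) :
    Ai x = (airyRay (airyDir 1) x c - airyRay (airyDir (-1)) x c) / (2 * π * Complex.I) := by
  rw [airyRay_sub_airyRay (airyDir_pow_three_re_neg abs_one)
    (airyDir_pow_three_re_neg (by norm_num))]
  exact (hasSum_airyCoeff_mul_pow x).tsum_eq

lemma isPrimitiveRoot_ωc : IsPrimitiveRoot ωc 3 := by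
  have h := Complex.isPrimitiveRoot_exp 3 three_ne_zero
  push_cast at h
  exact h

lemma airyCoeff_mul_sum_ωc_pow (k : ℕ) :
    airyCoeff k * (1 + ωc ^ (k + 1) + (ωc ^ (k + 1)) ^ 2) = 0 := by
  rcases Nat.coprime_or_dvd_of_prime Nat.prime_three (k + 1) with hcop | ⟨q, hq⟩
  · have h := (isPrimitiveRoot_ωc.pow_of_coprime _ hcop.symm).geom_sum_eq_zero (by norm_num)
    rw [Finset.sum_range_succ, Finset.sum_range_succ, Finset.sum_range_one, pow_zero,
      pow_one] at h
    rw [h, mul_zero]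
  · obtain ⟨p, rfl⟩ : ∃ p, k = 3 * p + 2 := ⟨q - 1, by omega⟩
    rw [airyCoeff_eq, show ((2 - (3 * p + 2 : ℕ)) / 3 : ℂ) = -p by push_cast; ring,
      Complex.Gamma_neg_nat_eq_zero, inv_zero, mul_zero, zero_mul]

theorem Ai_add_ωc_mul_Ai (x : ℂ) : Ai x + ωc * Ai (ωc * x) + ωc ^ 2 * Ai (ωc ^ 2 * x) = 0 := by
  have hs := fun y => (hasSum_airyCoeff_mul_pow y).summable.hasSum
  refine (((hs x).add ((hs (ωc * x)).mul_left ωc)).add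
    ((hs (ωc ^ 2 * x)).mul_left (ωc ^ 2))).unique (hasSum_zero.congr_fun fun k => ?_)
  linear_combination x ^ k * airyCoeff_mul_sum_ωc_pow k

end AiryIntegral

section AiryAsymptotics

open MeasureTheory Set Filter Topology

lemma hasDerivAt_sum_pow_div_factorial (n : ℕ) (z : ℂ) :
    HasDerivAt (fun z : ℂ => ∑ j ∈ Finset.range (n + 1), z ^ j / (j.factorial : ℂ))
      (∑ j ∈ Finset.range n, z ^ j / (j.factorial : ℂ)) z := by
  have h := HasDerivAt.fun_sum (u := Finset.range (n + 1)) (x := z)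
    (A := fun j (z : ℂ) => z ^ j / (j.factorial : ℂ))
    (A' := fun j => (j : ℂ) * z ^ (j - 1) / (j.factorial : ℂ))
    (fun j _ => (hasDerivAt_pow j z).div_const _)
  refine h.congr_deriv ?_
  rw [Finset.sum_range_succ']
  simp only [Nat.cast_zero, zero_mul, zero_div, add_zero, Nat.add_sub_cancel]
  refine Finset.sum_congr rfl fun j _ => ?_
  have h1 : ((j : ℂ) + 1) ≠ 0 := by exact_mod_cast Nat.succ_ne_zero j
  rw [Nat.factorial_succ]
  push_cast
  rw [mul_div_mul_left _ _ h1]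

lemma norm_exp_sub_sum_le_of_re_nonpos (n : ℕ) : ∀ z : ℂ, z.re ≤ 0 →
    ‖Complex.exp z - ∑ j ∈ Finset.range n, z ^ j / (j.factorial : ℂ)‖ ≤ ‖z‖ ^ n := by
  induction n with
  | zero =>
    intro z hz
    simpa [Complex.norm_exp] using hz
  | succ n ih =>
    intro z hz
    have hconv : Convex ℝ ({w : ℂ | w.re ≤ 0} ∩ Metric.closedBall 0 ‖z‖) :=
      ((convex_Iic (0 : ℝ)).linear_preimage Complex.reLm).inter (convex_closedBall _ _)
    have h := hconv.norm_image_sub_le_of_norm_hasDerivWithin_le (x := 0) (y := z) (C := ‖z‖ ^ n)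
      (f := fun z => Complex.exp z - ∑ j ∈ Finset.range (n + 1), z ^ j / (j.factorial : ℂ))
      (f' := fun z => Complex.exp z - ∑ j ∈ Finset.range n, z ^ j / (j.factorial : ℂ))
      (fun w _ => ((Complex.hasDerivAt_exp w).sub
        (hasDerivAt_sum_pow_div_factorial n w)).hasDerivWithinAt)
      (fun w hw => (ih w hw.1).trans (by
        have : ‖w‖ ≤ ‖z‖ := by simpa using hw.2
        gcongr)) ⟨by simp, by simp⟩ ⟨hz, by simp⟩
    have h0 : ∑ j ∈ Finset.range (n + 1), (0 : ℂ) ^ j / (j.factorial : ℂ) = 1 := by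
      rw [Finset.sum_range_succ']
      simp
    rw [h0, Complex.exp_zero, sub_self, sub_zero, sub_zero] at h
    rw [pow_succ]
    exact h

lemma norm_integral_cexp_mul_cexp_sub_sum_le (n q : ℕ) {m : ℕ} (hm : m ≠ 0) {b c : ℂ}
    (hb : 0 < b.re) (hc : c.re ≤ 0) :
    ‖(∫ u in Ioi (0 : ℝ), Complex.exp (-b * (u : ℂ) ^ m) * Complex.exp (c * (u : ℂ) ^ q)) -
      ∑ j ∈ Finset.range n, c ^ j / (j.factorial : ℂ) *
        ∫ u in Ioi (0 : ℝ), (u : ℂ) ^ (q * j) * Complex.exp (-b * (u : ℂ) ^ m)‖ ≤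
      ‖c‖ ^ n * ∫ u in Ioi (0 : ℝ), u ^ (q * n) * Real.exp (-b.re * u ^ m) := by
  have hnorm : ∀ u ∈ Ioi (0 : ℝ),
      ‖Complex.exp (-b * (u : ℂ) ^ m)‖ = Real.exp (-b.re * u ^ m) := fun u hu => by
    simpa only [pow_zero, one_mul] using norm_pow_mul_cexp_neg_mul_pow 0 m b (mem_Ioi.1 hu).le
  have hre : ∀ u ∈ Ioi (0 : ℝ), (c * (u : ℂ) ^ q).re ≤ 0 := fun u hu => by
    rw [← Complex.ofReal_pow, Complex.re_mul_ofReal]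
    exact mul_nonpos_of_nonpos_of_nonneg hc (pow_nonneg (mem_Ioi.1 hu).le q)
  have hterm : ∀ j : ℕ, IntegrableOn (fun u : ℝ => c ^ j / (j.factorial : ℂ) *
      ((u : ℂ) ^ (q * j) * Complex.exp (-b * (u : ℂ) ^ m))) (Ioi 0) := fun j =>
    (integrableOn_pow_mul_cexp_neg_mul_pow _ hm hb).const_mul _
  have hint : IntegrableOn (fun u : ℝ => Complex.exp (-b * (u : ℂ) ^ m) *
      Complex.exp (c * (u : ℂ) ^ q)) (Ioi 0) := by
    refine Integrable.mono' (integrableOn_pow_mul_exp_neg_mul_pow 0 hm hb) (by fun_prop) ?_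
    filter_upwards [ae_restrict_mem measurableSet_Ioi] with u hu
    rw [norm_mul, hnorm u hu, pow_zero, one_mul, Complex.norm_exp]
    exact mul_le_of_le_one_right (Real.exp_pos _).le (Real.exp_le_one_iff.2 (hre u hu))
  simp only [← integral_const_mul]
  rw [← integral_finsetSum _ fun j _ => hterm j,
    ← integral_sub hint (integrable_finsetSum _ fun j _ => hterm j)]
  refine norm_integral_le_of_norm_le
    ((integrableOn_pow_mul_exp_neg_mul_pow (q * n) hm hb).const_mul _) ?_
  filter_upwards [ae_restrict_mem measurableSet_Ioi] with u hu
  calc _ = ‖Complex.exp (-b * (u : ℂ) ^ m) * (Complex.exp (c * (u : ℂ) ^ q) -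
          ∑ j ∈ Finset.range n, (c * (u : ℂ) ^ q) ^ j / (j.factorial : ℂ))‖ := by
        rw [mul_sub, Finset.mul_sum]
        congr 2
        refine Finset.sum_congr rfl fun j _ => ?_
        rw [mul_pow, ← pow_mul]
        ring
    _ ≤ Real.exp (-b.re * u ^ m) * ‖c * (u : ℂ) ^ q‖ ^ n := by
        rw [norm_mul, hnorm u hu]
        gcongr
        exact norm_exp_sub_sum_le_of_re_nonpos n _ (hre u hu)
    _ = _ := by
        rw [norm_mul, norm_pow, Complex.norm_of_nonneg (mem_Ioi.1 hu).le, mul_pow, ← pow_mul]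
        ring

lemma airyRay_saddle (d s : ℂ) :
    airyRay d (s ^ 2) s = Complex.exp (-(2 / 3 * s ^ 3)) * (d * ∫ u in Ioi (0 : ℝ),
      Complex.exp (-(-s * d ^ 2) * (u : ℂ) ^ 2) * Complex.exp (d ^ 3 / 3 * (u : ℂ) ^ 3)) := by
  rw [airyRay, ← integral_const_mul, ← integral_const_mul]
  refine integral_congr_ae (Eventually.of_forall fun u => ?_)
  simp only
  rw [mul_left_comm, ← Complex.exp_add, ← Complex.exp_add]
  ring_nf

lemma neg_cexp_mul_airyDir_sq {σ : ℝ} (hσ : |σ| = 1) (ℓ : ℂ) :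
    -Complex.exp ℓ * airyDir σ ^ 2 = Complex.exp (ℓ - (σ * (π / 9) : ℝ) * Complex.I) := by
  rw [neg_eq_neg_one_mul, ← cexp_neg_mul_pi_mul_I hσ, airyDir, ← Complex.exp_nat_mul,
    ← Complex.exp_add, ← Complex.exp_add]
  push_cast
  ring_nf

lemma abs_im_sub_mul_I_le {σ : ℝ} (hσ : |σ| = 1) {ℓ : ℂ} (hℓ : |ℓ.im| ≤ π / 3) :
    |(ℓ - (σ * (π / 9) : ℝ) * Complex.I).im| ≤ 4 * π / 9 := by
  rw [Complex.sub_im, Complex.im_ofReal_mul, Complex.I_im, mul_one]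
  refine (abs_sub _ _).trans ?_
  rw [abs_mul, hσ, one_mul, abs_of_pos (show 0 < π / 9 by positivity)]
  linarith

lemma cos_mul_exp_le_neg_cexp_mul_airyDir_sq_re {σ : ℝ} (hσ : |σ| = 1) {ℓ : ℂ}
    (hℓ : |ℓ.im| ≤ π / 3) :
    Real.exp (Real.log (Real.cos (4 * π / 9)) + ℓ.re) ≤
      (-Complex.exp ℓ * airyDir σ ^ 2).re := by
  have hpi := Real.pi_pos
  rw [neg_cexp_mul_airyDir_sq hσ, Real.exp_add, Real.exp_log
    (Real.cos_pos_of_mem_Ioo ⟨by linarith, by linarith⟩), Complex.exp_re, Complex.sub_re,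
    Complex.re_ofReal_mul, Complex.I_re, mul_zero, sub_zero, mul_comm]
  refine mul_le_mul_of_nonneg_left ?_ (Real.exp_pos _).le
  rw [← Real.cos_abs (Complex.im _)]
  exact Real.cos_le_cos_of_nonneg_of_le_pi (abs_nonneg _) (by linarith) (abs_im_sub_mul_I_le hσ hℓ)

lemma airyDir_pow_mul_integral_sq {σ : ℝ} (hσ : |σ| = 1) (k : ℕ) {ℓ : ℂ}
    (hℓ : |ℓ.im| ≤ π / 3) :
    airyDir σ ^ (k + 1) * ∫ u in Ioi (0 : ℝ),
        (u : ℂ) ^ k * Complex.exp (-(-Complex.exp ℓ * airyDir σ ^ 2) * (u : ℂ) ^ 2) =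
      1 / 2 * Complex.Gamma ((k + 1) / 2) * Complex.exp (-ℓ / 2) ^ (k + 1) *
        (σ * Complex.I) ^ (k + 1) := by
  have hβ : Complex.exp (ℓ - σ * π * Complex.I) = -Complex.exp ℓ := by
    rw [sub_eq_add_neg, Complex.exp_add, cexp_neg_mul_pi_mul_I hσ, mul_neg_one]
  have hI : (σ * Complex.I : ℂ) = Complex.exp (σ * (π / 2 * Complex.I)) := by
    rcases eq_or_eq_neg_of_abs_eq hσ with rfl | rfl
    · simp [Complex.exp_pi_div_two_mul_I]
    · simp [Complex.exp_neg, Complex.exp_pi_div_two_mul_I]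
  have h := cexp_pow_mul_integral_pow_mul_cexp k two_ne_zero
    (β := ℓ - σ * π * Complex.I) (δ := σ * (4 * π / 9) * Complex.I) (by
      have heq : ℓ - σ * π * Complex.I + (2 : ℕ) * (σ * (4 * π / 9) * Complex.I) =
          ℓ - (σ * (π / 9) : ℝ) * Complex.I := by
        push_cast
        ring
      rw [heq]
      linarith [abs_im_sub_mul_I_le hσ hℓ, Real.pi_pos])
  rw [hβ, ← airyDir] at h
  push_cast at h
  rw [h, hI, mul_assoc _ (_ ^ _), ← mul_pow, ← Complex.exp_add, ← Complex.exp_nat_mul]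
  push_cast
  ring_nf

/-- The coefficients in the expansion of the ray integrals at the saddle point in powers of
`e^{-3ℓ/2}`. -/
noncomputable def saddleCoeff (j : ℕ) : ℂ :=
  Complex.Gamma ((3 * j + 1) / 2) / (2 * 3 ^ j * j.factorial)

lemma norm_airyDir (σ : ℝ) : ‖airyDir σ‖ = 1 := by
  rw [airyDir, show (σ * (4 * π / 9) * Complex.I : ℂ) = (σ * (4 * π / 9) : ℝ) * Complex.I by
    push_cast; rfl, Complex.norm_exp_ofReal_mul_I]

lemma saddleCoeff_mul_pow {σ : ℝ} (hσ : |σ| = 1) (j : ℕ) {ℓ : ℂ} (hℓ : |ℓ.im| ≤ π / 3) :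
    saddleCoeff j * (Complex.exp (-ℓ / 2) * (σ * Complex.I)) ^ (3 * j + 1) =
      airyDir σ * ((airyDir σ ^ 3 / 3) ^ j / (j.factorial : ℂ) * ∫ u in Ioi (0 : ℝ),
        (u : ℂ) ^ (3 * j) *
          Complex.exp (-(-Complex.exp ℓ * airyDir σ ^ 2) * (u : ℂ) ^ 2)) := by
  have h := airyDir_pow_mul_integral_sq hσ (3 * j) hℓ
  rw [pow_succ (airyDir σ), pow_mul (airyDir σ)] at h
  push_cast at h
  rw [saddleCoeff, mul_pow, div_pow]
  linear_combination (-1 / (3 ^ j * j.factorial : ℂ)) * h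

theorem exists_saddle_expansion (n : ℕ) : ∃ C, ∀ σ : ℝ, |σ| = 1 → ∀ ℓ : ℂ, |ℓ.im| ≤ π / 3 →
    ‖(airyDir σ * ∫ u in Ioi (0 : ℝ),
        Complex.exp (-(-Complex.exp ℓ * airyDir σ ^ 2) * (u : ℂ) ^ 2) *
          Complex.exp (airyDir σ ^ 3 / 3 * (u : ℂ) ^ 3)) -
      ∑ j ∈ Finset.range n,
        saddleCoeff j * (Complex.exp (-ℓ / 2) * (σ * Complex.I)) ^ (3 * j + 1)‖ ≤
      C * Real.exp (-((3 * n + 1) / 2) * ℓ.re) := by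
  set t₀ := Real.log (Real.cos (4 * π / 9))
  refine ⟨(1 / 3) ^ n * (1 / (2 : ℕ) * (Real.exp (-t₀ * (((3 * n : ℕ) + 1) / (2 : ℕ))) *
    Real.Gamma (((3 * n : ℕ) + 1) / (2 : ℕ)))), fun σ hσ ℓ hℓ => ?_⟩
  have hre := cos_mul_exp_le_neg_cexp_mul_airyDir_sq_re hσ hℓ
  set b := -Complex.exp ℓ * airyDir σ ^ 2
  have hb : 0 < b.re := (Real.exp_pos _).trans_le hre
  have hc : (airyDir σ ^ 3 / 3).re ≤ 0 := by
    rw [Complex.div_ofNat_re]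
    linarith [airyDir_pow_three_re_neg hσ]
  have hmono : ∫ u in Ioi (0 : ℝ), u ^ (3 * n) * Real.exp (-b.re * u ^ 2) ≤
      ∫ u in Ioi (0 : ℝ), u ^ (3 * n) * Real.exp (-Real.exp (t₀ + ℓ.re) * u ^ 2) := by
    refine setIntegral_mono_on (integrableOn_pow_mul_exp_neg_mul_pow _ two_ne_zero hb)
      (integrableOn_pow_mul_exp_neg_mul_pow _ two_ne_zero (Real.exp_pos _)) measurableSet_Ioi
      fun u hu => ?_
    have hu0 : 0 ≤ u := (mem_Ioi.1 hu).le
    gcongr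
  simp only [saddleCoeff_mul_pow hσ _ hℓ]
  rw [← Finset.mul_sum, ← mul_sub, norm_mul, norm_airyDir, one_mul]
  refine (norm_integral_cexp_mul_cexp_sub_sum_le n 3 two_ne_zero hb hc).trans ?_
  rw [norm_div, norm_pow, norm_airyDir, one_pow, Complex.norm_ofNat]
  refine (mul_le_mul_of_nonneg_left hmono (by positivity)).trans_eq ?_
  rw [integral_pow_mul_exp_neg_exp_mul_pow _ two_ne_zero, neg_add, add_mul, Real.exp_add]
  push_cast
  ring_nf

/-- `Ai(e^{2ℓ})`, normalized by its leading asymptotics; in the logarithmic coordinate `ℓ` the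
powers of the argument are entire. -/
noncomputable def airyAmp (ℓ : ℂ) : ℂ :=
  Ai (Complex.exp (2 * ℓ)) * (2 * (√π : ℝ)) *
    Complex.exp (2 / 3 * Complex.exp (3 * ℓ) + ℓ / 2)

lemma airyAmp_eq_saddle (ℓ : ℂ) : airyAmp ℓ =
    ((airyDir 1 * ∫ u in Ioi (0 : ℝ),
        Complex.exp (-(-Complex.exp ℓ * airyDir 1 ^ 2) * (u : ℂ) ^ 2) *
          Complex.exp (airyDir 1 ^ 3 / 3 * (u : ℂ) ^ 3)) -
      airyDir (-1) * ∫ u in Ioi (0 : ℝ),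
        Complex.exp (-(-Complex.exp ℓ * airyDir (-1) ^ 2) * (u : ℂ) ^ 2) *
          Complex.exp (airyDir (-1) ^ 3 / 3 * (u : ℂ) ^ 3)) *
      (Complex.exp (ℓ / 2) / ((√π : ℝ) * Complex.I)) := by
  have hsq : (π : ℂ) = ((√π : ℝ) : ℂ) ^ 2 := by
    rw [← Complex.ofReal_pow, Real.sq_sqrt Real.pi_pos.le]
  have hsq0 : ((√π : ℝ) : ℂ) ≠ 0 := by exact_mod_cast (Real.sqrt_pos.2 Real.pi_pos).ne'
  have h2 : Complex.exp (2 * ℓ) = Complex.exp ℓ ^ 2 := by rw [← Complex.exp_nat_mul]; norm_num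
  have h3 : Complex.exp (3 * ℓ) = Complex.exp ℓ ^ 3 := by rw [← Complex.exp_nat_mul]; norm_num
  rw [airyAmp, h2, h3, Ai_eq_airyRay_sub_airyRay _ (Complex.exp ℓ), airyRay_saddle,
    airyRay_saddle, Complex.exp_add, Complex.exp_neg, hsq]
  have hI := Complex.I_ne_zero
  field_simp

lemma saddleCoeff_zero : saddleCoeff 0 = (√π : ℝ) / 2 := by
  have h := Complex.Gamma_ofReal (1 / 2)
  rw [Real.Gamma_one_half_eq] at h
  push_cast at h
  rw [saddleCoeff, Nat.cast_zero, mul_zero, zero_add, h]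
  simp

lemma saddleCoeff_two : saddleCoeff 2 = 5 / 48 * ((√π : ℝ) / 2) := by
  have h : Real.Gamma (7 / 2) = 15 / 8 * √π := by
    rw [show (7 / 2 : ℝ) = 1 / 2 + 1 + 1 + 1 by norm_num, Real.Gamma_add_one (by norm_num),
      Real.Gamma_add_one (by norm_num), Real.Gamma_add_one (by norm_num), Real.Gamma_one_half_eq]
    ring
  have h' := Complex.Gamma_ofReal (7 / 2)
  rw [h] at h'
  push_cast at h'
  norm_num [saddleCoeff, h', Nat.factorial]
  ring

lemma saddleExpansion_four_sub (ℓ : ℂ) :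
    ((∑ j ∈ Finset.range 4,
        saddleCoeff j * (Complex.exp (-ℓ / 2) * ((1 : ℝ) * Complex.I)) ^ (3 * j + 1)) -
      ∑ j ∈ Finset.range 4,
        saddleCoeff j * (Complex.exp (-ℓ / 2) * ((-1 : ℝ) * Complex.I)) ^ (3 * j + 1)) *
      (Complex.exp (ℓ / 2) / ((√π : ℝ) * Complex.I)) =
    1 - 5 / 48 * Complex.exp (-3 * ℓ) := by
  have hsq0 : ((√π : ℝ) : ℂ) ≠ 0 := by exact_mod_cast (Real.sqrt_pos.2 Real.pi_pos).ne'
  have hinv : Complex.exp (ℓ / 2) = (Complex.exp (-ℓ / 2))⁻¹ := by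
    rw [← Complex.exp_neg]
    ring_nf
  have hpow : Complex.exp (-3 * ℓ) = Complex.exp (-ℓ / 2) ^ 6 := by
    rw [← Complex.exp_nat_mul]
    ring_nf
  have hexp := Complex.exp_ne_zero (-ℓ / 2)
  have hI := Complex.I_ne_zero
  have hI7 : Complex.I ^ 7 = -Complex.I := by
    rw [Complex.I_pow_eq_pow_mod, Complex.I_pow_three]
  simp only [Finset.sum_range_succ, Finset.sum_range_zero, saddleCoeff_zero, saddleCoeff_two]
  rw [hpow, hinv]
  generalize Complex.exp (-ℓ / 2) = E at hexp ⊢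
  push_cast
  field_simp
  linear_combination (10 * ((√π : ℝ) : ℂ) * E ^ 7) * hI7

theorem exists_airyAmp_bound_sector : ∃ C > (0 : ℝ), ∀ ℓ : ℂ, |ℓ.im| ≤ π / 3 →
    ‖airyAmp ℓ - (1 - 5 / 48 * Complex.exp (-3 * ℓ))‖ ≤ C * Real.exp (-6 * ℓ.re) := by
  obtain ⟨C, hC⟩ := exists_saddle_expansion 4
  have hpi : 0 < √π := Real.sqrt_pos.2 Real.pi_pos
  refine ⟨max 1 (2 * C / √π), by positivity, fun ℓ hℓ => ?_⟩
  rw [airyAmp_eq_saddle, ← saddleExpansion_four_sub, ← sub_mul, norm_mul, norm_div, norm_mul,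
    Complex.norm_I, mul_one, Complex.norm_of_nonneg hpi.le, Complex.norm_exp, Complex.div_ofNat_re,
    sub_sub_sub_comm]
  calc _ ≤ (C * Real.exp (-((3 * (4 : ℕ) + 1) / 2) * ℓ.re) +
        C * Real.exp (-((3 * (4 : ℕ) + 1) / 2) * ℓ.re)) * (Real.exp (ℓ.re / 2) / √π) := by
        refine mul_le_mul_of_nonneg_right ((norm_sub_le _ _).trans ?_) (by positivity)
        exact add_le_add (hC 1 abs_one ℓ hℓ) (hC (-1) (by norm_num) ℓ hℓ)
    _ = 2 * C / √π * Real.exp (-6 * ℓ.re) := by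
        rw [show -6 * ℓ.re = -((3 * (4 : ℕ) + 1) / 2) * ℓ.re + ℓ.re / 2 by push_cast; ring,
          Real.exp_add]
        ring
    _ ≤ _ := by
        gcongr
        exact le_max_right _ _

end AiryAsymptotics

section AiryExtension

lemma cexp_three_mul_add_two_pi_div_three (ℓ : ℂ) :
    Complex.exp (3 * (ℓ + 2 * π / 3 * Complex.I)) = Complex.exp (3 * ℓ) := by
  rw [show 3 * (ℓ + 2 * π / 3 * Complex.I) = 3 * ℓ + 2 * π * Complex.I by ring,
    Complex.exp_periodic]

lemma cexp_three_mul_add_pi_div_three (ℓ : ℂ) :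
    Complex.exp (3 * (ℓ + π / 3 * Complex.I)) = -Complex.exp (3 * ℓ) := by
  rw [show 3 * (ℓ + π / 3 * Complex.I) = 3 * ℓ + π * Complex.I by ring, Complex.exp_add_pi_mul_I]

lemma cexp_two_mul_add_pi_div_three (ℓ : ℂ) :
    Complex.exp (2 * (ℓ + π / 3 * Complex.I)) = ωc * Complex.exp (2 * ℓ) := by
  rw [ωc, ← Complex.exp_add]
  ring_nf

lemma airyAmp_eq_add_two_pi_div_three (ℓ : ℂ) : airyAmp ℓ = airyAmp (ℓ + 2 * π / 3 * Complex.I) -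
    Complex.I * Complex.exp (4 / 3 * Complex.exp (3 * ℓ)) * airyAmp (ℓ + π / 3 * Complex.I) := by
  have hAi := Ai_add_ωc_mul_Ai (Complex.exp (2 * ℓ))
  have hω₁ : Complex.I * Complex.exp (4 / 3 * Complex.exp (3 * ℓ)) *
      Complex.exp (2 / 3 * -Complex.exp (3 * ℓ) + (ℓ + π / 3 * Complex.I) / 2) =
      ωc * Complex.exp (2 / 3 * Complex.exp (3 * ℓ) + ℓ / 2) := by
    nth_rewrite 1 [← Complex.exp_pi_div_two_mul_I]
    rw [ωc, ← Complex.exp_add, ← Complex.exp_add, ← Complex.exp_add]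
    ring_nf
  have hω₂ : Complex.exp (2 / 3 * Complex.exp (3 * ℓ) + (ℓ + 2 * π / 3 * Complex.I) / 2) =
      -ωc ^ 2 * Complex.exp (2 / 3 * Complex.exp (3 * ℓ) + ℓ / 2) := by
    rw [ωc, ← Complex.exp_nat_mul, neg_mul, ← Complex.exp_add, ← Complex.exp_sub_pi_mul_I]
    push_cast
    ring_nf
  have hx₂ : Complex.exp (2 * (ℓ + 2 * π / 3 * Complex.I)) = ωc ^ 2 * Complex.exp (2 * ℓ) := by
    rw [ωc, ← Complex.exp_nat_mul, ← Complex.exp_add]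
    push_cast
    ring_nf
  simp only [airyAmp]
  rw [cexp_two_mul_add_pi_div_three, cexp_three_mul_add_pi_div_three, hx₂,
    cexp_three_mul_add_two_pi_div_three, hω₂]
  linear_combination (2 * (√π : ℝ) * Complex.exp (2 / 3 * Complex.exp (3 * ℓ) + ℓ / 2)) * hAi +
    (Ai (ωc * Complex.exp (2 * ℓ)) * (2 * (√π : ℝ))) * hω₁

lemma airyAmp_eq_add_mul {σ : ℝ} (hσ : |σ| = 1) (ℓ : ℂ) :
    airyAmp ℓ = airyAmp (ℓ + (σ * (2 * π / 3) : ℝ) * Complex.I) - σ * Complex.I *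
      Complex.exp (4 / 3 * Complex.exp (3 * ℓ)) * airyAmp (ℓ + (σ * (π / 3) : ℝ) * Complex.I) := by
  rcases eq_or_eq_neg_of_abs_eq hσ with rfl | rfl
  · have h := airyAmp_eq_add_two_pi_div_three ℓ
    push_cast
    simpa only [one_mul] using h
  · have h := airyAmp_eq_add_two_pi_div_three (ℓ - 2 * π / 3 * Complex.I)
    rw [← cexp_three_mul_add_two_pi_div_three, sub_add_cancel,
      show ℓ - 2 * π / 3 * Complex.I + π / 3 * Complex.I = ℓ + (-1 * (π / 3) : ℝ) * Complex.I by
        push_cast; ring,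
      show ℓ - 2 * π / 3 * Complex.I = ℓ + (-1 * (2 * π / 3) : ℝ) * Complex.I by
        push_cast; ring] at h
    rw [h]
    push_cast
    ring

lemma exists_norm_airyAmp_le : ∃ C > (0 : ℝ), ∀ ℓ : ℂ, 0 ≤ ℓ.re → |ℓ.im| ≤ π / 3 →
    ‖airyAmp ℓ‖ ≤ C := by
  obtain ⟨C, hC, h⟩ := exists_airyAmp_bound_sector
  refine ⟨C + 2, by positivity, fun ℓ hre him => ?_⟩
  have hremainder : C * Real.exp (-6 * ℓ.re) ≤ C :=
    mul_le_of_le_one_right hC.le (Real.exp_le_one_iff.2 (by linarith))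
  have hterm : ‖5 / 48 * Complex.exp (-3 * ℓ)‖ ≤ 1 := by
    rw [norm_mul, Complex.norm_exp]
    refine mul_le_one₀ (by norm_num) (Real.exp_pos _).le (Real.exp_le_one_iff.2 ?_)
    simpa using hre
  calc ‖airyAmp ℓ‖
      ≤ ‖airyAmp ℓ - (1 - 5 / 48 * Complex.exp (-3 * ℓ))‖ +
        ‖1 - 5 / 48 * Complex.exp (-3 * ℓ)‖ := norm_le_norm_sub_add _ _
    _ ≤ C + (1 + 1) := by
        gcongr
        · exact (h ℓ him).trans hremainder
        · refine (norm_sub_le _ _).trans ?_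
          rw [norm_one]
          gcongr
    _ = C + 2 := by ring

lemma exists_abs_eq_one_abs_add_le {t : ℝ} (h₁ : π / 3 < |t|) (h₂ : |t| ≤ 2 * π / 3) :
    ∃ σ : ℝ, |σ| = 1 ∧ |t + σ * (2 * π / 3)| ≤ π / 3 ∧ |t + σ * (π / 3)| ≤ π / 3 := by
  have hpi := Real.pi_pos
  rw [abs_le] at h₂
  rcases lt_abs.1 h₁ with h | h
  · exact ⟨-1, by norm_num, abs_le.2 ⟨by linarith, by linarith⟩,
      abs_le.2 ⟨by linarith, by linarith⟩⟩
  · exact ⟨1, abs_one, abs_le.2 ⟨by linarith, by linarith⟩,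
      abs_le.2 ⟨by linarith, by linarith⟩⟩

/-- Beyond the sector `|Im ℓ| ≤ π/3` the expansion persists only while the second exponential of
the connection formula is negligible. -/
theorem exists_airyAmp_bound : ∃ C > (0 : ℝ), ∀ ℓ : ℂ, 0 ≤ ℓ.re → |ℓ.im| ≤ 2 * π / 3 →
    (|ℓ.im| ≤ π / 3 ∨ 4 / 3 * (Complex.exp (3 * ℓ)).re ≤ -6 * ℓ.re) →
    ‖airyAmp ℓ - (1 - 5 / 48 * Complex.exp (-3 * ℓ))‖ ≤ C * Real.exp (-6 * ℓ.re) := by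
  obtain ⟨C, hC, h⟩ := exists_airyAmp_bound_sector
  obtain ⟨B, hB, hbdd⟩ := exists_norm_airyAmp_le
  refine ⟨C + B, by positivity, fun ℓ hre him hor => ?_⟩
  rcases le_or_gt |ℓ.im| (π / 3) with hsec | hsec
  · exact (h ℓ hsec).trans (by gcongr; linarith)
  obtain ⟨σ, hσ, him₁, him₂⟩ := exists_abs_eq_one_abs_add_le hsec him
  have hre_add : ∀ t : ℝ, (ℓ + t * Complex.I).re = ℓ.re := by simp
  have him_add : ∀ t : ℝ, (ℓ + t * Complex.I).im = ℓ.im + t := by simp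
  have hmain := h (ℓ + (σ * (2 * π / 3) : ℝ) * Complex.I) (by rwa [him_add])
  have hsecond := hbdd (ℓ + (σ * (π / 3) : ℝ) * Complex.I) (by rwa [hre_add]) (by rwa [him_add])
  have hperiod : Complex.exp (-3 * (ℓ + (σ * (2 * π / 3) : ℝ) * Complex.I)) =
      Complex.exp (-3 * ℓ) := by
    refine Complex.exp_eq_exp_iff_exists_int.2 ?_
    rcases eq_or_eq_neg_of_abs_eq hσ with rfl | rfl
    · exact ⟨-1, by push_cast; ring⟩
    · exact ⟨1, by push_cast; ring⟩
  have hsmall : ‖σ * Complex.I * Complex.exp (4 / 3 * Complex.exp (3 * ℓ))‖ ≤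
      Real.exp (-6 * ℓ.re) := by
    rw [norm_mul, norm_mul, Complex.norm_real, Real.norm_eq_abs, hσ, Complex.norm_I, one_mul,
      one_mul, Complex.norm_exp, Real.exp_le_exp]
    simpa using hor.resolve_left hsec.not_ge
  rw [hre_add, hperiod] at hmain
  rw [airyAmp_eq_add_mul hσ, sub_right_comm, add_mul]
  refine (norm_sub_le _ _).trans (add_le_add hmain ?_)
  rw [norm_mul, mul_comm B]
  gcongr

end AiryExtension

section RotatedAiry

open Asymptotics Filter

/-- A region in which the second exponential of the connection formula is negligible. Here
`Im ℓ = ± π/2` are the anti-Stokes rays, i.e. the negative axis of the variable `e^{2ℓ}`. -/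
def airyRegion : Set ℂ :=
  {ℓ | 0 ≤ ℓ.re ∧ |ℓ.im| ≤ π / 2 ∧
    6 * ℓ.re ≤ 8 / π * Real.exp (3 * ℓ.re) * (π / 2 - |ℓ.im|)}

lemma cexp_three_mul_re_le {ℓ : ℂ} (hℓ : ℓ ∈ airyRegion) (him : π / 3 < |ℓ.im|) :
    4 / 3 * (Complex.exp (3 * ℓ)).re ≤ -6 * ℓ.re := by
  obtain ⟨-, hle, hdecay⟩ := hℓ
  have hsin := Real.mul_le_sin (x := 3 * (π / 2 - |ℓ.im|)) (by linarith) (by linarith)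
  have hcos : Real.cos (3 * ℓ.im) = -Real.sin (3 * (π / 2 - |ℓ.im|)) := by
    rw [← Real.cos_abs, abs_mul, abs_of_pos three_pos, ← Real.cos_add_pi_div_two,
      ← Real.cos_two_pi_sub]
    ring_nf
  have hre : (Complex.exp (3 * ℓ)).re =
      -(Real.exp (3 * ℓ.re) * Real.sin (3 * (π / 2 - |ℓ.im|))) := by
    rw [Complex.exp_re, ← mul_neg, ← hcos]
    simp
  have hlower := mul_le_mul_of_nonneg_left hsin (Real.exp_pos (3 * ℓ.re)).le
  rw [hre]
  calc 4 / 3 * -(Real.exp (3 * ℓ.re) * Real.sin (3 * (π / 2 - |ℓ.im|)))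
      ≤ 4 / 3 * -(Real.exp (3 * ℓ.re) * (2 / π * (3 * (π / 2 - |ℓ.im|)))) := by gcongr
    _ = -(8 / π * Real.exp (3 * ℓ.re) * (π / 2 - |ℓ.im|)) := by ring
    _ ≤ -6 * ℓ.re := by linarith

theorem airyAmp_sub_isBigO : (fun ℓ => airyAmp ℓ - (1 - 5 / 48 * Complex.exp (-3 * ℓ)))
    =O[𝓟 airyRegion] fun ℓ => Complex.exp (-3 * ℓ) ^ 2 := by
  obtain ⟨C, -, h⟩ := exists_airyAmp_bound
  refine isBigO_principal.2 ⟨C, fun ℓ hℓ => ?_⟩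
  have hnorm : ‖Complex.exp (-3 * ℓ) ^ 2‖ = Real.exp (-6 * ℓ.re) := by
    have hre : (-3 * ℓ).re = -3 * ℓ.re := by simp
    rw [norm_pow, Complex.norm_exp, ← Real.exp_nat_mul, hre]
    ring_nf
  rw [hnorm]
  refine h ℓ hℓ.1 (hℓ.2.1.trans (by linarith [Real.pi_pos])) ?_
  exact (le_or_gt _ _).imp_right (cexp_three_mul_re_le hℓ)

/-- The logarithmic coordinate `ℓ` with `e^{2ℓ} = e^{μ - 2it} f^{-2/3}`. -/
noncomputable def airyArg (f t : ℝ) (μ : ℂ) : ℂ := μ / 2 - (Real.log f / 3 : ℝ) - t * Complex.I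

lemma airyArg_re (f t : ℝ) (μ : ℂ) :
    (airyArg f t μ).re = (3 * μ.re - 2 * Real.log f) / 6 := by
  rw [airyArg, Complex.sub_re, Complex.sub_re, Complex.div_ofNat_re, Complex.ofReal_re,
    Complex.re_ofReal_mul, Complex.I_re]
  ring

lemma airyArg_im (f t : ℝ) (μ : ℂ) : (airyArg f t μ).im = μ.im / 2 - t := by
  simp [airyArg]

lemma airyArg_mem_airyRegion {f t : ℝ} {μ : ℂ} (hf : 0 < f) (ht : π / 6 ≤ t) (ht' : t ≤ π / 2)
    (h₀ : 0 ≤ μ.im) (h₁ : μ.im ≤ 4 * π / 3) (hre : 0 ≤ 3 * μ.re - 2 * Real.log f)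
    (hdecay : 3 * μ.re - 2 * Real.log f ≤
      4 / π * (Real.exp (3 * μ.re / 2) / f) * min μ.im (4 * π / 3 - μ.im)) :
    airyArg f t μ ∈ airyRegion := by
  have hexp : Real.exp (3 * (airyArg f t μ).re) = Real.exp (3 * μ.re / 2) / f := by
    rw [← Real.exp_log hf, ← Real.exp_sub, Real.exp_log hf, airyArg_re]
    ring_nf
  refine ⟨by rw [airyArg_re]; linarith, ?_, ?_⟩
  · rw [airyArg_im, abs_le]
    constructor <;> linarith
  · have hmin : min μ.im (4 * π / 3 - μ.im) ≤ 2 * (π / 2 - |(airyArg f t μ).im|) := by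
      rw [airyArg_im]
      rcases abs_cases (μ.im / 2 - t) with ⟨h, -⟩ | ⟨h, -⟩
      · exact (min_le_right _ _).trans (by linarith)
      · exact (min_le_left _ _).trans (by linarith)
    rw [hexp, airyArg_re]
    calc 6 * ((3 * μ.re - 2 * Real.log f) / 6)
        ≤ 4 / π * (Real.exp (3 * μ.re / 2) / f) * min μ.im (4 * π / 3 - μ.im) := by linarith
      _ ≤ 4 / π * (Real.exp (3 * μ.re / 2) / f) * (2 * (π / 2 - |(airyArg f t μ).im|)) := by
        gcongr
      _ = _ := by ring

lemma cexp_three_mul_airyArg {f : ℝ} (hf : 0 < f) (t : ℝ) (μ : ℂ) :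
    Complex.exp (3 * airyArg f t μ) =
      Complex.exp (-(3 * t) * Complex.I) * (Complex.exp (3 * μ / 2) / f) := by
  have hlog : Complex.exp (Real.log f : ℝ) = f := by rw [← Complex.ofReal_exp, Real.exp_log hf]
  rw [← hlog, ← Complex.exp_sub, ← Complex.exp_add, airyArg]
  push_cast
  ring_nf

lemma cexp_neg_three_mul_airyArg {f : ℝ} (hf : 0 < f) (t : ℝ) (μ : ℂ) :
    Complex.exp (-3 * airyArg f t μ) =
      Complex.exp (3 * t * Complex.I) * (f * Complex.exp (-3 * μ / 2)) := by
  rw [neg_mul, Complex.exp_neg, cexp_three_mul_airyArg hf, mul_inv, inv_div, ← Complex.exp_neg,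
    div_eq_mul_inv, ← Complex.exp_neg]
  ring_nf

lemma cexp_two_mul_airyArg {f : ℝ} (hf : 0 < f) (t : ℝ) (μ : ℂ) :
    Complex.exp (2 * airyArg f t μ) =
      Complex.exp (-(2 * t) * Complex.I) * Complex.exp μ * ((f ^ (-(2 : ℝ) / 3) : ℝ) : ℂ) := by
  rw [Real.rpow_def_of_pos hf, Complex.ofReal_exp, ← Complex.exp_add, ← Complex.exp_add, airyArg]
  push_cast
  ring_nf

lemma cexp_three_pi_div_two_mul_I : Complex.exp (3 * (π / 2 : ℝ) * Complex.I) = -Complex.I := by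
  rw [show (3 * (π / 2 : ℝ) * Complex.I : ℂ) = π * Complex.I + π / 2 * Complex.I by
    push_cast; ring, Complex.exp_add, Complex.exp_pi_mul_I, Complex.exp_pi_div_two_mul_I,
    neg_one_mul]

lemma cexp_three_pi_div_six_mul_I : Complex.exp (3 * (π / 6 : ℝ) * Complex.I) = Complex.I := by
  rw [show (3 * (π / 6 : ℝ) * Complex.I : ℂ) = π / 2 * Complex.I by push_cast; ring,
    Complex.exp_pi_div_two_mul_I]

lemma cexp_two_mul_airyArg_pi_div_two {f : ℝ} (hf : 0 < f) (μ : ℂ) :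
    Complex.exp (2 * airyArg f (π / 2) μ) = -Complex.exp μ * ((f ^ (-(2 : ℝ) / 3) : ℝ) : ℂ) := by
  rw [cexp_two_mul_airyArg hf,
    show (-(2 * (π / 2 : ℝ)) * Complex.I : ℂ) = -(π * Complex.I) by push_cast; ring,
    Complex.exp_neg, Complex.exp_pi_mul_I]
  norm_num

lemma cexp_two_mul_airyArg_pi_div_six {f : ℝ} (hf : 0 < f) (μ : ℂ) :
    Complex.exp (2 * airyArg f (π / 6) μ) =
      -ωc * Complex.exp μ * ((f ^ (-(2 : ℝ) / 3) : ℝ) : ℂ) := by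
  rw [cexp_two_mul_airyArg hf, show (-(2 * (π / 6 : ℝ)) * Complex.I : ℂ) =
    2 * π * Complex.I / 3 - π * Complex.I by push_cast; ring, Complex.exp_sub_pi_mul_I, ωc]

lemma airyAmp_airyArg_sub_isBigO (t : ℝ) :
    (fun p : ℝ × ℂ => airyAmp (airyArg p.1 t p.2) -
      (1 - 5 / 48 * (Complex.exp (3 * t * Complex.I) * (p.1 * Complex.exp (-3 * p.2 / 2)))))
      =O[𝓟 {p | 0 < p.1 ∧ airyArg p.1 t p.2 ∈ airyRegion}]
    fun p => (p.1 * Complex.exp (-3 * p.2 / 2)) ^ 2 := by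
  have hsub : Set.EqOn
      (fun p : ℝ × ℂ => airyAmp (airyArg p.1 t p.2) -
        (1 - 5 / 48 * Complex.exp (-3 * airyArg p.1 t p.2)))
      (fun p => airyAmp (airyArg p.1 t p.2) -
        (1 - 5 / 48 * (Complex.exp (3 * t * Complex.I) * (p.1 * Complex.exp (-3 * p.2 / 2)))))
      {p | 0 < p.1 ∧ airyArg p.1 t p.2 ∈ airyRegion} := fun p hp => by
    simp only [cexp_neg_three_mul_airyArg hp.1]
  have hsq : Set.EqOn (fun p : ℝ × ℂ => Complex.exp (-3 * airyArg p.1 t p.2) ^ 2)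
      (fun p => Complex.exp (3 * t * Complex.I) ^ 2 * (p.1 * Complex.exp (-3 * p.2 / 2)) ^ 2)
      {p | 0 < p.1 ∧ airyArg p.1 t p.2 ∈ airyRegion} := fun p hp => by
    simp only [cexp_neg_three_mul_airyArg hp.1, mul_pow]
  have htends : Tendsto (fun p : ℝ × ℂ => airyArg p.1 t p.2)
      (𝓟 {p | 0 < p.1 ∧ airyArg p.1 t p.2 ∈ airyRegion}) (𝓟 airyRegion) :=
    tendsto_principal_principal.2 fun _ hp => hp.2
  exact ((airyAmp_sub_isBigO.comp_tendsto htends).congr' (hsub.eventuallyEq)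
    (hsq.eventuallyEq)).trans (isBigO_const_mul_self _ _ _)

lemma Ai_cexp_two_mul (ℓ : ℂ) : Ai (Complex.exp (2 * ℓ)) = airyAmp ℓ *
    Complex.exp (-(2 / 3 * Complex.exp (3 * ℓ) + ℓ / 2)) / (2 * (√π : ℝ)) := by
  have hpi : ((√π : ℝ) : ℂ) ≠ 0 := by exact_mod_cast (Real.sqrt_pos.2 Real.pi_pos).ne'
  rw [airyAmp, Complex.exp_neg]
  field_simp

lemma two_pi_mul_Wf_mul_I {f : ℝ} (hf : 0 < f) : 2 * π * Wf f * Complex.I =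
    Complex.exp ((Real.log f : ℝ) / 3 + π / 3 * Complex.I) := by
  rw [Wf, Real.rpow_def_of_pos hf, Complex.ofReal_exp, mul_div_cancel₀ _ (by simp)]
  nth_rewrite 2 [← Complex.exp_pi_div_two_mul_I]
  rw [← Complex.exp_add, ← Complex.exp_add]
  push_cast
  ring_nf

/-- The building block of `D_f`: the products `α±/W` and `β±/W` as functions of the logarithms `μ`
and `ν` of the points where the rotated and the unrotated Airy function are evaluated. -/
noncomputable def airyProd (f : ℝ) (μ ν : ℂ) : ℂ :=
  Ai (-ωc * Complex.exp μ * ((f ^ (-(2 : ℝ) / 3) : ℝ) : ℂ)) *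
    Ai (-Complex.exp ν * ((f ^ (-(2 : ℝ) / 3) : ℝ) : ℂ)) / Wf f

/-- The factor of `airyProd` that tends to `1`. -/
noncomputable def ampProd (f : ℝ) (μ ν : ℂ) : ℂ :=
  airyAmp (airyArg f (π / 6) μ) * airyAmp (airyArg f (π / 2) ν)

lemma airyProd_eq_mul_ampProd {f : ℝ} (hf : 0 < f) (μ ν : ℂ) :
    airyProd f μ ν = Complex.I / 2 * Complex.exp (-(μ + ν) / 4) *
      Complex.exp (2 * Complex.I / (3 * f) * (Complex.exp (3 * μ / 2) - Complex.exp (3 * ν / 2))) *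
      ampProd f μ ν := by
  have hsq : ((√π : ℝ) : ℂ) ^ 2 = π := by
    rw [← Complex.ofReal_pow, Real.sq_sqrt Real.pi_pos.le]
  have hpi : (π : ℂ) ≠ 0 := by exact_mod_cast Real.pi_ne_zero
  have hW := two_pi_mul_Wf_mul_I hf
  have hexponent : Complex.exp (-(2 / 3 * Complex.exp (3 * airyArg f (π / 6) μ) +
        airyArg f (π / 6) μ / 2)) *
      Complex.exp (-(2 / 3 * Complex.exp (3 * airyArg f (π / 2) ν) + airyArg f (π / 2) ν / 2)) =
      2 * π * Wf f * Complex.I * (Complex.exp (-(μ + ν) / 4) *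
      Complex.exp (2 * Complex.I / (3 * f) *
        (Complex.exp (3 * μ / 2) - Complex.exp (3 * ν / 2)))) := by
    have hrot : Complex.exp (-(3 * (π / 2 : ℝ)) * Complex.I) = Complex.I := by
      rw [neg_mul, Complex.exp_neg, cexp_three_pi_div_two_mul_I, inv_neg, Complex.inv_I, neg_neg]
    have hrot' : Complex.exp (-(3 * (π / 6 : ℝ)) * Complex.I) = -Complex.I := by
      rw [neg_mul, Complex.exp_neg, cexp_three_pi_div_six_mul_I, Complex.inv_I]
    rw [cexp_three_mul_airyArg hf, cexp_three_mul_airyArg hf, hrot, hrot', hW, ← Complex.exp_add,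
      ← Complex.exp_add, ← Complex.exp_add, airyArg, airyArg]
    push_cast
    ring_nf
  have hW₀ : Wf f ≠ 0 := fun h => Complex.exp_ne_zero _ (hW.symm.trans (by rw [h]; ring))
  rw [airyProd, ampProd, ← cexp_two_mul_airyArg_pi_div_two hf, ← cexp_two_mul_airyArg_pi_div_six hf,
    Ai_cexp_two_mul, Ai_cexp_two_mul, div_mul_div_comm, mul_mul_mul_comm, hexponent]
  have hden : (2 * (√π : ℝ) * (2 * (√π : ℝ)) : ℂ) = 4 * π := by linear_combination 4 * hsq
  rw [hden]
  field_simp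
  ring

end RotatedAiry

section SquareRoots

open Asymptotics Filter Topology

/-- The principal square root of `1 + h`, written as an exponential so that it can be combined with
logarithmic coordinates. -/
noncomputable def sqrtOneAdd (h : ℂ) : ℂ := Complex.exp (Complex.log (1 + h) / 2)

lemma sqrtOneAdd_ne_zero (h : ℂ) : sqrtOneAdd h ≠ 0 := Complex.exp_ne_zero _

lemma sqrtOneAdd_zero : sqrtOneAdd 0 = 1 := by simp [sqrtOneAdd]

lemma sqrtOneAdd_sq {h : ℂ} (hh : 1 + h ≠ 0) : sqrtOneAdd h ^ 2 = 1 + h := by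
  rw [sqrtOneAdd, ← Complex.exp_nat_mul]
  push_cast
  rw [mul_div_cancel₀ _ two_ne_zero, Complex.exp_log hh]

lemma differentiableAt_sqrtOneAdd : DifferentiableAt ℂ sqrtOneAdd 0 := by
  have hslit : 1 + (0 : ℂ) ∈ Complex.slitPlane := by simp
  unfold sqrtOneAdd
  fun_prop (disch := assumption)

lemma tendsto_sqrtOneAdd : Tendsto sqrtOneAdd (𝓝 0) (𝓝 1) := by
  simpa only [sqrtOneAdd_zero] using differentiableAt_sqrtOneAdd.continuousAt.tendsto

lemma tendsto_sqrtOneAdd_neg : Tendsto (fun h => sqrtOneAdd (-h)) (𝓝 0) (𝓝 1) :=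
  tendsto_sqrtOneAdd.comp (by simpa using (continuous_neg (G := ℂ)).tendsto 0)

lemma eventually_sqrtOneAdd_sq :
    ∀ᶠ h in 𝓝 (0 : ℂ), sqrtOneAdd h ^ 2 = 1 + h ∧ sqrtOneAdd (-h) ^ 2 = 1 - h := by
  have hcont : ContinuousAt (fun h : ℂ => (1 + h) * (1 + -h)) 0 := by fun_prop
  filter_upwards [hcont.eventually_ne (by simp : (1 + (0 : ℂ)) * (1 + -0) ≠ 0)] with h hh
  exact ⟨sqrtOneAdd_sq (left_ne_zero_of_mul hh), sqrtOneAdd_sq (right_ne_zero_of_mul hh)⟩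

lemma isBigO_of_mul_tendsto {α : Type*} {l : Filter α} {F G g : α → ℂ} {c : ℂ} (hc : c ≠ 0)
    (hG : Tendsto G l (𝓝 c)) (h : (fun x => F x * G x) =O[l] g) : F =O[l] g := by
  have hinv := h.mul ((hG.inv₀ hc).isBigO_one ℂ)
  simp only [mul_one] at hinv
  refine hinv.congr' ?_ EventuallyEq.rfl
  filter_upwards [hG.eventually_ne hc] with x hx
  exact mul_inv_cancel_right₀ hx _

lemma sqrtOneAdd_mul_sub_one_isBigO :
    (fun h => sqrtOneAdd h * sqrtOneAdd (-h) - 1) =O[𝓝 0] fun h => h ^ 2 := by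
  refine isBigO_of_mul_tendsto (c := 1 * 1 + 1) (by norm_num)
    ((tendsto_sqrtOneAdd.mul tendsto_sqrtOneAdd_neg).add_const 1) ?_
  refine (isBigO_refl _ _).neg_left.congr' ?_ EventuallyEq.rfl
  filter_upwards [eventually_sqrtOneAdd_sq] with h ⟨hu, hv⟩
  linear_combination -sqrtOneAdd (-h) ^ 2 * hu - (1 + h) * hv

lemma sqrtOneAdd_add_sub_two_isBigO :
    (fun h => sqrtOneAdd h + sqrtOneAdd (-h) - 2) =O[𝓝 0] fun h => h ^ 2 := by
  refine isBigO_of_mul_tendsto (c := 1 + 1 + 2) (by norm_num)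
    ((tendsto_sqrtOneAdd.add tendsto_sqrtOneAdd_neg).add_const 2) ?_
  refine (sqrtOneAdd_mul_sub_one_isBigO.const_mul_left 2).congr' ?_ EventuallyEq.rfl
  filter_upwards [eventually_sqrtOneAdd_sq] with h ⟨hu, hv⟩
  linear_combination -hu - hv

lemma sqrtOneAdd_inv_mul_inv_sub_one_isBigO :
    (fun h => (sqrtOneAdd h)⁻¹ * (sqrtOneAdd (-h))⁻¹ - 1) =O[𝓝 0] fun h => h ^ 2 := by
  refine isBigO_of_mul_tendsto (by norm_num)
    (tendsto_sqrtOneAdd.mul tendsto_sqrtOneAdd_neg) ?_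
  refine sqrtOneAdd_mul_sub_one_isBigO.neg_left.congr_left fun h => ?_
  field_simp [sqrtOneAdd_ne_zero]
  ring

lemma sqrtOneAdd_inv_add_inv_sub_two_isBigO :
    (fun h => (sqrtOneAdd h)⁻¹ + (sqrtOneAdd (-h))⁻¹ - 2) =O[𝓝 0] fun h => h ^ 2 := by
  refine isBigO_of_mul_tendsto (by norm_num)
    (tendsto_sqrtOneAdd.mul tendsto_sqrtOneAdd_neg) ?_
  refine (sqrtOneAdd_add_sub_two_isBigO.sub
    (sqrtOneAdd_mul_sub_one_isBigO.const_mul_left 2)).congr_left fun h => ?_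
  field_simp [sqrtOneAdd_ne_zero]
  ring

lemma sqrtOneAdd_pow_three_sub_isBigO :
    (fun h => sqrtOneAdd h ^ 3 - sqrtOneAdd (-h) ^ 3 - 3 * h) =O[𝓝 0] fun h => h ^ 3 := by
  refine isBigO_of_mul_tendsto (c := 1 + 1) (by norm_num)
    (tendsto_sqrtOneAdd.add tendsto_sqrtOneAdd_neg) ?_
  have hbig := (isBigO_refl (fun h : ℂ => h) (𝓝 0)).mul
    ((sqrtOneAdd_mul_sub_one_isBigO.const_mul_left 2).sub
      (sqrtOneAdd_add_sub_two_isBigO.const_mul_left 3))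
  refine hbig.congr' ?_ (Eventually.of_forall fun h => (pow_succ' h 2).symm)
  filter_upwards [eventually_sqrtOneAdd_sq] with h ⟨hu, hv⟩
  linear_combination (-(sqrtOneAdd h ^ 2 + sqrtOneAdd h * sqrtOneAdd (-h) +
    sqrtOneAdd (-h) ^ 2)) * (hu - hv) - 2 * h * (hu + hv)

lemma sqrtOneAdd_pow_three_inv_sub_one_isBigO :
    (fun h => (sqrtOneAdd h ^ 3)⁻¹ - 1) =O[𝓝 0] fun h => h := by
  have hdiff := ((differentiableAt_sqrtOneAdd.pow 3).inv
    (pow_ne_zero 3 (sqrtOneAdd_ne_zero 0))).isBigO_sub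
  simpa [sqrtOneAdd_zero] using hdiff

end SquareRoots

section Determinant

lemma Df_eq_airyProd {κ η f : ℝ} {z μ ν : ℂ} (hμ : Complex.exp μ = z + κ * f)
    (hν : Complex.exp ν = z - κ * f) :
    Df κ η f z = 1 + (airyProd f μ μ + airyProd f ν ν) / η +
      (airyProd f μ μ * airyProd f ν ν - airyProd f μ ν ^ 2) / η ^ 2 := by
  simp only [airyProd, Df, alphaP, alphaM, betaP, betaM, hμ, hν]
  ring

/-- The ratio `κf/z` for `z = e^m`. -/
noncomputable def shiftRatio (κ f : ℝ) (m : ℂ) : ℂ := κ * f * Complex.exp (-m)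

/-- The logarithm of `z + κf` for `z = e^m`, continued from `m`. -/
noncomputable def logShift (κ f : ℝ) (m : ℂ) : ℂ := m + Complex.log (1 + shiftRatio κ f m)

lemma shiftRatio_neg (κ f : ℝ) (m : ℂ) : shiftRatio (-κ) f m = -shiftRatio κ f m := by
  simp [shiftRatio]

lemma shiftRatio_mul_cexp (κ f : ℝ) (m : ℂ) : shiftRatio κ f m * Complex.exp m = κ * f := by
  rw [shiftRatio, mul_assoc, ← Complex.exp_add, neg_add_cancel, Complex.exp_zero, mul_one]

lemma cexp_half_sq (m : ℂ) : Complex.exp (m / 2) ^ 2 = Complex.exp m := by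
  rw [← Complex.exp_nat_mul]
  push_cast
  ring_nf

variable {κ f : ℝ} {m : ℂ}

lemma cexp_logShift (h : 1 + shiftRatio κ f m ≠ 0) :
    Complex.exp (logShift κ f m) = Complex.exp m + κ * f := by
  rw [logShift, Complex.exp_add, Complex.exp_log h, mul_one_add, mul_comm, shiftRatio_mul_cexp]

lemma cexp_half_logShift (κ f : ℝ) (m : ℂ) :
    Complex.exp (logShift κ f m / 2) = Complex.exp (m / 2) * sqrtOneAdd (shiftRatio κ f m) := by
  rw [logShift, add_div, Complex.exp_add, sqrtOneAdd]

lemma cexp_three_mul_logShift_div_two (κ f : ℝ) (m : ℂ) : Complex.exp (3 * logShift κ f m / 2) =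
    Complex.exp (m / 2) ^ 3 * sqrtOneAdd (shiftRatio κ f m) ^ 3 := by
  rw [← mul_pow, ← cexp_half_logShift, ← Complex.exp_nat_mul]
  push_cast
  ring_nf

lemma cexp_neg_three_mul_logShift_div_two (κ f : ℝ) (m : ℂ) :
    Complex.exp (-3 * logShift κ f m / 2) =
      (Complex.exp (m / 2) ^ 3)⁻¹ * (sqrtOneAdd (shiftRatio κ f m) ^ 3)⁻¹ := by
  rw [← mul_inv, ← cexp_three_mul_logShift_div_two, ← Complex.exp_neg]
  ring_nf

/-- The amplitude in the product of Airy functions evaluated at `z + κ₁f` and `z + κ₂f`, for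
`z = e^m`. -/
noncomputable def ampShift (κ₁ κ₂ f : ℝ) (m : ℂ) : ℂ :=
  ampProd f (logShift κ₁ f m) (logShift κ₂ f m)

/-- The deviation of the squared exponential in the cross term of `D_f` from `e^{4iκ√z}`, for
`z = e^m`. -/
noncomputable def crossPhase (κ f : ℝ) (m : ℂ) : ℂ :=
  4 * Complex.I / (3 * f) * (Complex.exp (m / 2) ^ 3 *
    (sqrtOneAdd (shiftRatio κ f m) ^ 3 - sqrtOneAdd (-shiftRatio κ f m) ^ 3 -
      3 * shiftRatio κ f m))

lemma airyProd_logShift_self (hf : 0 < f) (κ : ℝ) (m : ℂ) :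
    airyProd f (logShift κ f m) (logShift κ f m) =
      Complex.I / (2 * Complex.exp (m / 2)) *
        ((sqrtOneAdd (shiftRatio κ f m))⁻¹ * ampShift κ κ f m) := by
  have hexp : Complex.exp (-(logShift κ f m + logShift κ f m) / 4) =
      (Complex.exp (m / 2) * sqrtOneAdd (shiftRatio κ f m))⁻¹ := by
    rw [← cexp_half_logShift, ← Complex.exp_neg]
    ring_nf
  rw [airyProd_eq_mul_ampProd hf, hexp, sub_self, mul_zero, Complex.exp_zero, ampShift]
  ring

lemma airyProd_logShift_neg_sq (hf : 0 < f) (κ : ℝ) (m : ℂ) :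
    airyProd f (logShift κ f m) (logShift (-κ) f m) ^ 2 =
      (Complex.I / (2 * Complex.exp (m / 2))) ^ 2 *
        (Complex.exp (4 * Complex.I * κ * Complex.exp (m / 2)) *
          ((sqrtOneAdd (shiftRatio κ f m))⁻¹ * (sqrtOneAdd (-shiftRatio κ f m))⁻¹ *
            (Complex.exp (crossPhase κ f m) * ampShift κ (-κ) f m ^ 2))) := by
  have hf' : (f : ℂ) ≠ 0 := by exact_mod_cast hf.ne'
  have hexp : Complex.exp (-(logShift κ f m + logShift (-κ) f m) / 4) ^ 2 =
      (Complex.exp (m / 2) * sqrtOneAdd (shiftRatio κ f m))⁻¹ *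
        (Complex.exp (m / 2) * sqrtOneAdd (-shiftRatio κ f m))⁻¹ := by
    rw [← shiftRatio_neg, ← cexp_half_logShift, ← cexp_half_logShift, ← Complex.exp_neg,
      ← Complex.exp_neg, ← Complex.exp_add, ← Complex.exp_nat_mul]
    push_cast
    ring_nf
  have hphase : Complex.exp (2 * Complex.I / (3 * f) *
        (Complex.exp (3 * logShift κ f m / 2) - Complex.exp (3 * logShift (-κ) f m / 2))) ^ 2 =
      Complex.exp (4 * Complex.I * κ * Complex.exp (m / 2)) * Complex.exp (crossPhase κ f m) := by
    have hratio := shiftRatio_mul_cexp κ f m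
    rw [← cexp_half_sq] at hratio
    rw [cexp_three_mul_logShift_div_two, cexp_three_mul_logShift_div_two, shiftRatio_neg,
      crossPhase, ← Complex.exp_nat_mul, ← Complex.exp_add]
    congr 1
    push_cast
    field_simp
    linear_combination 12 * hratio
  rw [airyProd_eq_mul_ampProd hf, mul_pow, mul_pow, mul_pow, hexp, hphase, ampShift]
  ring

lemma Df_cexp_sub_eq (hf : 0 < f) {η : ℝ} (hη : η ≠ 0) (h : 1 + shiftRatio κ f m ≠ 0)
    (h' : 1 - shiftRatio κ f m ≠ 0) :
    Df κ η f (Complex.exp m) -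
        ((2 * η * Complex.exp (m / 2) + Complex.I) ^ 2 +
          Complex.exp (4 * Complex.I * κ * Complex.exp (m / 2))) / (4 * Complex.exp m * η ^ 2) =
      Complex.I / (2 * Complex.exp (m / 2)) / η *
        ((sqrtOneAdd (shiftRatio κ f m))⁻¹ * ampShift κ κ f m +
          (sqrtOneAdd (-shiftRatio κ f m))⁻¹ * ampShift (-κ) (-κ) f m - 2) +
      (Complex.I / (2 * Complex.exp (m / 2)) / η) ^ 2 *
        (((sqrtOneAdd (shiftRatio κ f m))⁻¹ * ampShift κ κ f m *
            ((sqrtOneAdd (-shiftRatio κ f m))⁻¹ * ampShift (-κ) (-κ) f m) - 1) -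
          Complex.exp (4 * Complex.I * κ * Complex.exp (m / 2)) *
            ((sqrtOneAdd (shiftRatio κ f m))⁻¹ * (sqrtOneAdd (-shiftRatio κ f m))⁻¹ *
              (Complex.exp (crossPhase κ f m) * ampShift κ (-κ) f m ^ 2) - 1)) := by
  have hη' : (η : ℂ) ≠ 0 := by exact_mod_cast hη
  have hs := Complex.exp_ne_zero (m / 2)
  have hν : Complex.exp (logShift (-κ) f m) = Complex.exp m - κ * f := by
    rw [cexp_logShift (by rwa [shiftRatio_neg, ← sub_eq_add_neg])]
    push_cast
    ring
  rw [Df_eq_airyProd (cexp_logShift h) hν, airyProd_logShift_self hf, airyProd_logShift_self hf,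
    airyProd_logShift_neg_sq hf, shiftRatio_neg, ← cexp_half_sq m]
  generalize (sqrtOneAdd (shiftRatio κ f m))⁻¹ = u, (sqrtOneAdd (-shiftRatio κ f m))⁻¹ = v,
    Complex.exp (crossPhase κ f m) = G, Complex.exp (4 * Complex.I * κ * Complex.exp (m / 2)) = E
  field_simp
  linear_combination -4 * E * Complex.I_sq

end Determinant

section ResonanceRegion

open Filter Topology

/-- `r^{-1/2}` for `z = e^m` with `|z| = r`. -/
noncomputable def invSqrtAbs (m : ℂ) : ℝ := Real.exp (-m.re / 2)

/-- The region between the two critical rays, in the variables `f` and `m = log z`. -/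
def rayRegion (a M : ℝ) : Set (ℝ × ℂ) :=
  {p | p.1 ^ a < Real.exp p.2.re ∧
    M * (p.1 * invSqrtAbs p.2 ^ 3 * Real.log (p.1⁻¹ + Real.exp p.2.re)) < p.2.im ∧
    p.2.im < 4 * π / 3 - M * (p.1 * (invSqrtAbs p.2 ^ 2 + invSqrtAbs p.2 ^ 3) *
      Real.log (p.1⁻¹ + Real.exp p.2.re))}

/-- The limit `f → 0⁺`, uniformly over `log z` in the region between the critical rays. -/
def rayFilter (a M : ℝ) : Filter (ℝ × ℂ) := comap Prod.fst (𝓝[>] 0) ⊓ 𝓟 (rayRegion a M)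

variable {a M : ℝ}

lemma invSqrtAbs_pos (m : ℂ) : 0 < invSqrtAbs m := Real.exp_pos _

lemma tendsto_fst_rayFilter : Tendsto Prod.fst (rayFilter a M) (𝓝[>] 0) :=
  tendsto_comap.mono_left inf_le_left

lemma eventually_fst_pos : ∀ᶠ p in rayFilter a M, 0 < p.1 :=
  tendsto_fst_rayFilter.eventually self_mem_nhdsWithin

lemma tendsto_fst_zero : Tendsto Prod.fst (rayFilter a M) (𝓝 0) :=
  tendsto_fst_rayFilter.mono_right nhdsWithin_le_nhds

lemma eventually_mem_rayRegion : ∀ᶠ p in rayFilter a M, p ∈ rayRegion a M :=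
  mem_inf_of_right (mem_principal_self _)

lemma mul_invSqrtAbs_pow_three_le {p : ℝ × ℂ} (hf : 0 < p.1) (hp : p.1 ^ a < Real.exp p.2.re) :
    p.1 * invSqrtAbs p.2 ^ 3 ≤ p.1 ^ (1 - 3 * a / 2) := by
  have hy : invSqrtAbs p.2 ^ 3 = Real.exp p.2.re ^ (-3 / 2 : ℝ) := by
    rw [invSqrtAbs, ← Real.exp_nat_mul, ← Real.exp_mul]
    push_cast
    ring_nf
  calc p.1 * invSqrtAbs p.2 ^ 3 ≤ p.1 * (p.1 ^ a) ^ (-3 / 2 : ℝ) := by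
        rw [hy]
        gcongr p.1 * ?_
        exact Real.rpow_le_rpow_of_nonpos (Real.rpow_pos_of_pos hf a) hp.le (by norm_num)
    _ = p.1 ^ (1 - 3 * a / 2) := by
        rw [← Real.rpow_mul hf.le, sub_eq_add_neg, Real.rpow_add hf, Real.rpow_one]
        ring_nf

lemma tendsto_mul_invSqrtAbs_pow_three (ha : a < 2 / 3) :
    Tendsto (fun p => p.1 * invSqrtAbs p.2 ^ 3) (rayFilter a M) (𝓝 0) := by
  have hexp : 0 < 1 - 3 * a / 2 := by linarith
  have hpow : Tendsto (fun p : ℝ × ℂ => p.1 ^ (1 - 3 * a / 2)) (rayFilter a M) (𝓝 0) := by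
    simpa only [Real.zero_rpow hexp.ne'] using
      (tendsto_fst_zero (a := a) (M := M)).rpow_const (Or.inr hexp.le)
  refine squeeze_zero' ?_ ?_ hpow
  · filter_upwards [eventually_fst_pos] with p hf
    have := invSqrtAbs_pos p.2
    positivity
  · filter_upwards [eventually_fst_pos, eventually_mem_rayRegion] with p hf hp
    exact mul_invSqrtAbs_pow_three_le hf hp.1

lemma norm_shiftRatio (κ f : ℝ) (m : ℂ) :
    ‖shiftRatio κ f m‖ = |κ| * |f| * invSqrtAbs m ^ 2 := by
  rw [shiftRatio, norm_mul, norm_mul, Complex.norm_real, Complex.norm_real, Complex.norm_exp,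
    invSqrtAbs, ← Real.exp_nat_mul, Complex.neg_re, Real.norm_eq_abs, Real.norm_eq_abs]
  push_cast
  ring_nf

lemma tendsto_shiftRatio (ha : a < 2 / 3) (κ : ℝ) :
    Tendsto (fun p => shiftRatio κ p.1 p.2) (rayFilter a M) (𝓝 0) := by
  have hsum : Tendsto (fun p => |κ| * (p.1 + p.1 * invSqrtAbs p.2 ^ 3)) (rayFilter a M) (𝓝 0) := by
    simpa using (tendsto_fst_zero.add (tendsto_mul_invSqrtAbs_pow_three ha)).const_mul |κ|
  refine squeeze_zero_norm' ?_ hsum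
  filter_upwards [eventually_fst_pos] with p hf
  have hy : invSqrtAbs p.2 ^ 2 ≤ 1 + invSqrtAbs p.2 ^ 3 := by
    nlinarith [sq_nonneg (invSqrtAbs p.2 - 1), invSqrtAbs_pos p.2]
  calc ‖shiftRatio κ p.1 p.2‖ = |κ| * (p.1 * invSqrtAbs p.2 ^ 2) := by
        rw [norm_shiftRatio, abs_of_pos hf, mul_assoc]
    _ ≤ |κ| * (p.1 * (1 + invSqrtAbs p.2 ^ 3)) := by gcongr
    _ = _ := by ring

lemma neg_log_le_log_inv_add {f r : ℝ} (hf : 0 < f) (hr : 0 < r) :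
    -Real.log f ≤ Real.log (f⁻¹ + r) := by
  rw [← Real.log_inv]
  exact Real.log_le_log (inv_pos.2 hf) (by linarith)

lemma tendsto_log_inv_add_exp :
    Tendsto (fun p => Real.log (p.1⁻¹ + Real.exp p.2.re)) (rayFilter a M) atTop := by
  refine tendsto_atTop_mono' _ ?_ (tendsto_neg_atBot_atTop.comp
    (Real.tendsto_log_nhdsGT_zero.comp tendsto_fst_rayFilter))
  filter_upwards [eventually_fst_pos] with p hf
  exact neg_log_le_log_inv_add hf (Real.exp_pos _)

lemma abs_log_one_add_im_le {k : ℂ} (hk : ‖k‖ ≤ 1 / 2) :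
    |(Complex.log (1 + k)).im| ≤ 4 * |k.im| := by
  have hre : 0 ≤ (1 + k).re := by
    have := (abs_le.1 ((Complex.abs_re_le_norm k).trans hk)).1
    rw [Complex.add_re, Complex.one_re]
    linarith
  have hnorm : 1 / 2 ≤ ‖1 + k‖ := by
    have := norm_sub_norm_le (1 : ℂ) (-k)
    rw [norm_one, norm_neg, sub_neg_eq_add] at this
    linarith
  have hsin := Real.mul_abs_le_abs_sin (Complex.abs_arg_le_pi_div_two_iff.2 hre)
  rw [Complex.sin_arg, abs_div, abs_norm, Complex.add_im, Complex.one_im, zero_add] at hsin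
  rw [Complex.log_im]
  calc |(1 + k).arg| = π / 2 * (2 / π * |(1 + k).arg|) := by field_simp
    _ ≤ 4 / 2 * (|k.im| / (1 / 2)) := by
        gcongr
        · exact Real.pi_le_four
        · exact hsin.trans (by gcongr)
    _ = 4 * |k.im| := by ring

lemma abs_shiftRatio_im_le (κ f : ℝ) (m : ℂ) :
    |(shiftRatio κ f m).im| ≤ ‖shiftRatio κ f m‖ * |m.im| := by
  have him : (shiftRatio κ f m).im = κ * f * (Real.exp (-m.re) * -Real.sin m.im) := by
    rw [shiftRatio, ← Complex.ofReal_mul, Complex.im_ofReal_mul, Complex.exp_im, Complex.neg_re,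
      Complex.neg_im, Real.sin_neg]
  have hnorm : ‖shiftRatio κ f m‖ = |κ * f| * Real.exp (-m.re) := by
    rw [shiftRatio, ← Complex.ofReal_mul, norm_mul, Complex.norm_real, Complex.norm_exp,
      Complex.neg_re, Real.norm_eq_abs]
  rw [him, hnorm, abs_mul, abs_mul (Real.exp _), abs_neg, Real.abs_exp, ← mul_assoc]
  exact mul_le_mul_of_nonneg_left Real.abs_sin_le_abs (by positivity)

lemma eventually_le_min_im_logShift (ha : a < 2 / 3) (hM : 0 < M) (κ : ℝ) :
    ∀ᶠ p in rayFilter a M, (1 - 4 * ‖shiftRatio κ p.1 p.2‖) *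
        (M * (p.1 * invSqrtAbs p.2 ^ 3 * Real.log (p.1⁻¹ + Real.exp p.2.re))) ≤
      min (logShift κ p.1 p.2).im (4 * π / 3 - (logShift κ p.1 p.2).im) := by
  filter_upwards [eventually_fst_pos, eventually_mem_rayRegion,
    (tendsto_shiftRatio ha κ).norm.eventually_le_const (by norm_num : ‖(0 : ℂ)‖ < 1 / 4),
    tendsto_log_inv_add_exp.eventually_ge_atTop (4 * |κ| / M)] with p hf ⟨_, hlow, hup⟩ hk hL
  set L := Real.log (p.1⁻¹ + Real.exp p.2.re)
  have hy := invSqrtAbs_pos p.2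
  have hL₀ : 0 ≤ L := (by positivity : 0 ≤ 4 * |κ| / M).trans hL
  have him : 0 < p.2.im := lt_of_le_of_lt (by positivity) hlow
  have hlog := abs_le.1 (abs_log_one_add_im_le (hk.trans (by norm_num)))
  have hsmall := abs_shiftRatio_im_le κ p.1 p.2
  rw [abs_of_pos him] at hsmall
  have hsmall' : |(shiftRatio κ p.1 p.2).im| ≤ |κ| * p.1 * invSqrtAbs p.2 ^ 2 := by
    simpa only [norm_shiftRatio, abs_of_pos hf] using Complex.abs_im_le_norm (shiftRatio κ p.1 p.2)
  have hκ : 4 * (|κ| * p.1 * invSqrtAbs p.2 ^ 2) ≤ M * (p.1 * invSqrtAbs p.2 ^ 2 * L) := by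
    rw [div_le_iff₀' hM] at hL
    calc _ = 4 * |κ| * (p.1 * invSqrtAbs p.2 ^ 2) := by ring
      _ ≤ M * L * (p.1 * invSqrtAbs p.2 ^ 2) := by gcongr
      _ = _ := by ring
  have hw : 0 ≤ M * (p.1 * invSqrtAbs p.2 ^ 3 * L) := by positivity
  have hcoef : 0 ≤ 1 - 4 * ‖shiftRatio κ p.1 p.2‖ := by linarith
  rw [logShift, Complex.add_im]
  refine le_min ?_ ?_
  · linarith [mul_le_mul_of_nonneg_left hlow.le hcoef]
  · linarith [mul_nonneg (norm_nonneg (shiftRatio κ p.1 p.2)) hw]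

lemma norm_cexp_half (m : ℂ) : ‖Complex.exp (m / 2)‖ = (invSqrtAbs m)⁻¹ := by
  rw [Complex.norm_exp, invSqrtAbs, ← Real.exp_neg, Complex.div_ofNat_re]
  ring_nf

lemma exp_three_mul_logShift_re (κ f : ℝ) (m : ℂ) :
    Real.exp (3 * (logShift κ f m).re / 2) * invSqrtAbs m ^ 3 =
      ‖sqrtOneAdd (shiftRatio κ f m)‖ ^ 3 := by
  have hy := (invSqrtAbs_pos m).ne'
  have h := congrArg norm (cexp_three_mul_logShift_div_two κ f m)
  rw [Complex.norm_exp, norm_mul, norm_pow, norm_pow, norm_cexp_half,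
    show (3 * logShift κ f m / 2).re = 3 * (logShift κ f m).re / 2 by simp] at h
  rw [h]
  field_simp

lemma three_mul_logShift_re_sub_le {f : ℝ} (hf : 0 < f) (κ : ℝ) {m : ℂ}
    (hk : ‖shiftRatio κ f m‖ ≤ 1) :
    3 * (logShift κ f m).re - 2 * Real.log f ≤ 5 * Real.log (f⁻¹ + Real.exp m.re) + 6 := by
  have hre : m.re ≤ Real.log (f⁻¹ + Real.exp m.re) :=
    (Real.le_log_iff_exp_le (by positivity)).2 (by linarith [inv_pos.2 hf])
  have hlog : Real.log ‖1 + shiftRatio κ f m‖ ≤ 2 :=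
    (Real.log_le_self (norm_nonneg _)).trans
      ((norm_add_le _ _).trans (by rw [norm_one]; linarith))
  rw [logShift, Complex.add_re, Complex.log_re]
  linarith [neg_log_le_log_inv_add hf (Real.exp_pos m.re)]

lemma eventually_three_mul_logShift_re_sub_nonneg (ha : a < 2 / 3) (κ : ℝ) :
    ∀ᶠ p in rayFilter a M, 0 ≤ 3 * (logShift κ p.1 p.2).re - 2 * Real.log p.1 := by
  have hnorm : Tendsto (fun p => ‖sqrtOneAdd (shiftRatio κ p.1 p.2)‖ ^ 3) (rayFilter a M)
      (𝓝 1) := by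
    simpa using ((tendsto_sqrtOneAdd.comp (tendsto_shiftRatio ha κ)).norm).pow 3
  filter_upwards [eventually_fst_pos, (tendsto_mul_invSqrtAbs_pow_three ha).eventually_lt hnorm
    zero_lt_one] with p hf hlt
  rw [← exp_three_mul_logShift_re] at hlt
  have hexp := lt_of_mul_lt_mul_right hlt (pow_pos (invSqrtAbs_pos p.2) 3).le
  linarith [(Real.log_lt_iff_lt_exp hf).2 hexp]

lemma eventually_airyArg_logShift_mem (ha : a < 2 / 3) (hM : 5 * π / 4 < M) {t : ℝ}
    (ht : π / 6 ≤ t) (ht' : t ≤ π / 2) (κ : ℝ) :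
    ∀ᶠ p in rayFilter a M, airyArg p.1 t (logShift κ p.1 p.2) ∈ airyRegion := by
  have hpi := Real.pi_pos
  have hM₀ : 0 < M := by linarith
  obtain ⟨c, hc, hcM⟩ := exists_between ((lt_div_iff₀ hpi).2 (by linarith) : 5 < 4 * M / π)
  have hk := tendsto_shiftRatio (M := M) ha κ
  have hcoef : Tendsto (fun p => 4 / π * (‖sqrtOneAdd (shiftRatio κ p.1 p.2)‖ ^ 3 *
      ((1 - 4 * ‖shiftRatio κ p.1 p.2‖) * M))) (rayFilter a M) (𝓝 (4 * M / π)) := by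
    have := ((((tendsto_sqrtOneAdd.comp hk).norm.pow 3).mul
      (((hk.norm.const_mul 4).const_sub 1).mul_const M)).const_mul (4 / π))
    simpa [div_mul_eq_mul_div] using this
  filter_upwards [eventually_fst_pos,
    eventually_le_min_im_logShift ha hM₀ κ, eventually_three_mul_logShift_re_sub_nonneg ha κ,
    hk.norm.eventually_le_const (by norm_num : ‖(0 : ℂ)‖ < 1 / 4),
    hcoef.eventually_const_le hcM, tendsto_log_inv_add_exp.eventually_ge_atTop (6 / (c - 5))]
    with p hf hlow hre hk hcoef hL
  have hy := invSqrtAbs_pos p.2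
  set L := Real.log (p.1⁻¹ + Real.exp p.2.re)
  have hL₀ : 0 ≤ L := (div_nonneg (by norm_num) (by linarith)).trans hL
  have hw : 0 ≤ M * (p.1 * invSqrtAbs p.2 ^ 3 * L) := by positivity
  have hmin := (mul_nonneg (by linarith) hw).trans hlow
  refine airyArg_mem_airyRegion hf ht ht' (hmin.trans (min_le_left _ _))
    (sub_nonneg.1 (hmin.trans (min_le_right _ _))) hre ?_
  calc 3 * (logShift κ p.1 p.2).re - 2 * Real.log p.1
      ≤ 5 * L + 6 := three_mul_logShift_re_sub_le hf κ (hk.trans (by norm_num))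
    _ ≤ c * L := by linarith [(div_le_iff₀' (by linarith)).1 hL]
    _ ≤ 4 / π * (‖sqrtOneAdd (shiftRatio κ p.1 p.2)‖ ^ 3 *
          ((1 - 4 * ‖shiftRatio κ p.1 p.2‖) * M)) * L := by gcongr
    _ = 4 / π * (Real.exp (3 * (logShift κ p.1 p.2).re / 2) / p.1) *
          ((1 - 4 * ‖shiftRatio κ p.1 p.2‖) * (M * (p.1 * invSqrtAbs p.2 ^ 3 * L))) := by
        rw [← exp_three_mul_logShift_re]
        field_simp
    _ ≤ _ := by gcongr

end ResonanceRegion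

section ErrorEstimates

open Asymptotics Filter Topology

/-- The error `f² r^{-n/2} (1 + r^{-3/2})` at `p = (f, log z)` with `|z| = r`. -/
noncomputable def errorScale (n : ℕ) (p : ℝ × ℂ) : ℝ :=
  p.1 ^ 2 * (invSqrtAbs p.2 ^ n + invSqrtAbs p.2 ^ (n + 3))

/-- The expansion parameter `f z^{-3/2}` of the Airy amplitudes, for `z = e^m`. -/
noncomputable def expansionParam (f : ℝ) (m : ℂ) : ℂ := f * (Complex.exp (m / 2) ^ 3)⁻¹

variable {l : Filter (ℝ × ℂ)} {a M : ℝ}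

lemma sq_mul_invSqrtAbs_pow_isBigO {n k : ℕ} (hk : n ≤ k) (hk' : k ≤ n + 3) :
    (fun p : ℝ × ℂ => p.1 ^ 2 * invSqrtAbs p.2 ^ k) =O[l] errorScale n := by
  refine (isBigO_refl _ _).mul (isBigO_of_le _ fun p => ?_)
  have hy := invSqrtAbs_pos p.2
  rw [Real.norm_of_nonneg (by positivity), Real.norm_of_nonneg (by positivity)]
  rcases le_total (invSqrtAbs p.2) 1 with h | h
  · linarith [pow_le_pow_of_le_one hy.le h hk, pow_pos hy (n + 3)]
  · linarith [pow_le_pow_right₀ h hk', pow_pos hy n]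

lemma invSqrtAbs_mul_errorScale (n : ℕ) (p : ℝ × ℂ) :
    invSqrtAbs p.2 * errorScale n p = errorScale (n + 1) p := by
  rw [errorScale, errorScale]
  ring

lemma tendsto_errorScale_three (ha : a < 2 / 3) :
    Tendsto (errorScale 3) (rayFilter a M) (𝓝 0) := by
  have hw := tendsto_mul_invSqrtAbs_pow_three (M := M) ha
  have hlim := (tendsto_fst_zero.mul hw).add (hw.pow 2)
  norm_num at hlim
  refine hlim.congr fun p => ?_
  rw [errorScale]
  ring

lemma shiftRatio_isBigO (κ : ℝ) :
    (fun p : ℝ × ℂ => shiftRatio κ p.1 p.2) =O[l] fun p => p.1 * invSqrtAbs p.2 ^ 2 :=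
  isBigO_of_le' (c := |κ|) _ fun p => by
    rw [norm_shiftRatio, norm_mul, norm_pow, Real.norm_of_nonneg (invSqrtAbs_pos _).le,
      Real.norm_eq_abs, mul_assoc]

lemma shiftRatio_sq_isBigO (κ : ℝ) {n : ℕ} (hn : n ≤ 4) (hn' : 4 ≤ n + 3) :
    (fun p : ℝ × ℂ => shiftRatio κ p.1 p.2 ^ 2) =O[l] errorScale n :=
  (((shiftRatio_isBigO κ).pow 2).congr_right fun p => by ring).trans
    (sq_mul_invSqrtAbs_pow_isBigO hn hn')

lemma inv_cexp_half_isBigO :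
    (fun p : ℝ × ℂ => (Complex.exp (p.2 / 2))⁻¹) =O[l] fun p => invSqrtAbs p.2 :=
  isBigO_of_le _ fun p => by
    rw [norm_inv, norm_cexp_half, inv_inv, Real.norm_of_nonneg (invSqrtAbs_pos _).le]

lemma expansionParam_isBigO : (fun p : ℝ × ℂ => expansionParam p.1 p.2) =O[l]
    fun p => p.1 * invSqrtAbs p.2 ^ 3 :=
  (Complex.isBigO_ofReal_left.2 (isBigO_refl _ _)).mul
    ((inv_cexp_half_isBigO.pow 3).congr_left fun _ => inv_pow _ _)

lemma expansionParam_sq_isBigO {n : ℕ} (hn : 3 ≤ n) (hn' : n ≤ 6) :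
    (fun p : ℝ × ℂ => expansionParam p.1 p.2 ^ 2) =O[l] errorScale n :=
  ((expansionParam_isBigO.pow 2).congr_right fun p => by ring).trans
    (sq_mul_invSqrtAbs_pow_isBigO hn' (by omega))

lemma mul_sub_one_isBigO {F G : ℝ × ℂ → ℂ} {g : ℝ × ℂ → ℝ} (hg : g =O[l] fun _ => (1 : ℝ))
    (hF : (fun p => F p - 1) =O[l] g) (hG : (fun p => G p - 1) =O[l] g) :
    (fun p => F p * G p - 1) =O[l] g := by
  have hmul := hF.mul (hG.trans hg)
  simp only [mul_one] at hmul
  exact ((hmul.add hF).add hG).congr_left fun p => by ring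

lemma tendsto_pair_logShift (ha : a < 2 / 3) (hM : 5 * π / 4 < M) {t : ℝ} (ht : π / 6 ≤ t)
    (ht' : t ≤ π / 2) (κ : ℝ) :
    Tendsto (fun p : ℝ × ℂ => (p.1, logShift κ p.1 p.2)) (rayFilter a M)
      (𝓟 {p | 0 < p.1 ∧ airyArg p.1 t p.2 ∈ airyRegion}) :=
  tendsto_principal.2
    (eventually_fst_pos.and (eventually_airyArg_logShift_mem ha hM ht ht' κ))

lemma cexp_neg_logShift_sub_expansionParam_isBigO (ha : a < 2 / 3) (κ : ℝ) {n : ℕ}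
    (hn : 2 ≤ n) (hn' : n ≤ 5) :
    (fun p : ℝ × ℂ => p.1 * Complex.exp (-3 * logShift κ p.1 p.2 / 2) - expansionParam p.1 p.2)
      =O[rayFilter a M] errorScale n := by
  have hinv := (sqrtOneAdd_pow_three_inv_sub_one_isBigO.comp_tendsto
    (tendsto_shiftRatio (M := M) ha κ)).trans (shiftRatio_isBigO κ)
  refine ((expansionParam_isBigO.mul hinv).congr (fun p => ?_) (fun p => ?_)).trans
    (sq_mul_invSqrtAbs_pow_isBigO hn' (by omega : 5 ≤ n + 3))
  · rw [cexp_neg_three_mul_logShift_div_two, expansionParam, Function.comp_apply]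
    ring
  · ring

lemma airyAmp_sub_expansion_isBigO (ha : a < 2 / 3) (hM : 5 * π / 4 < M) {t : ℝ}
    (ht : π / 6 ≤ t) (ht' : t ≤ π / 2) (κ : ℝ) {n : ℕ} (hn : 3 ≤ n) (hn' : n ≤ 5) :
    (fun p => airyAmp (airyArg p.1 t (logShift κ p.1 p.2)) -
      (1 - 5 / 48 * (Complex.exp (3 * t * Complex.I) * expansionParam p.1 p.2)))
      =O[rayFilter a M] errorScale n := by
  have hsub := cexp_neg_logShift_sub_expansionParam_isBigO (M := M) ha κ (by omega : 2 ≤ n) hn'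
  have hamp := (airyAmp_airyArg_sub_isBigO t).comp_tendsto (tendsto_pair_logShift ha hM ht ht' κ)
  have hinv : Tendsto (fun p : ℝ × ℂ => (sqrtOneAdd (shiftRatio κ p.1 p.2) ^ 3)⁻¹)
      (rayFilter a M) (𝓝 1) := by
    simpa using ((tendsto_sqrtOneAdd.comp (tendsto_shiftRatio ha κ)).pow 3).inv₀ (by norm_num)
  have hparam : (fun p : ℝ × ℂ => p.1 * Complex.exp (-3 * logShift κ p.1 p.2 / 2))
      =O[rayFilter a M] fun p => expansionParam p.1 p.2 :=
    ((isBigO_refl _ _).mul (hinv.isBigO_one ℂ)).congr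
      (fun p => by rw [cexp_neg_three_mul_logShift_div_two, expansionParam]; ring)
      (fun p => mul_one _)
  have hsq := (hparam.pow 2).trans (expansionParam_sq_isBigO hn (by omega))
  exact ((hamp.trans hsq).sub
    (hsub.const_mul_left (5 / 48 * Complex.exp (3 * t * Complex.I)))).congr_left fun p => by
      rw [Function.comp_apply]
      ring

lemma tendsto_expansion (ha : a < 2 / 3) (c : ℂ) :
    Tendsto (fun p : ℝ × ℂ => 1 - 5 / 48 * (c * expansionParam p.1 p.2)) (rayFilter a M)
      (𝓝 1) := by
  have hw : Tendsto (fun p : ℝ × ℂ => expansionParam p.1 p.2) (rayFilter a M) (𝓝 0) :=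
    expansionParam_isBigO.trans_tendsto (tendsto_mul_invSqrtAbs_pow_three ha)
  simpa using ((hw.const_mul c).const_mul (5 / 48)).const_sub 1

lemma tendsto_airyAmp_airyArg_logShift (ha : a < 2 / 3) (hM : 5 * π / 4 < M) {t : ℝ}
    (ht : π / 6 ≤ t) (ht' : t ≤ π / 2) (κ : ℝ) :
    Tendsto (fun p => airyAmp (airyArg p.1 t (logShift κ p.1 p.2))) (rayFilter a M) (𝓝 1) := by
  have hsub := (airyAmp_sub_expansion_isBigO ha hM ht ht' κ le_rfl
    (by norm_num : 3 ≤ 5)).trans_tendsto (tendsto_errorScale_three ha)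
  simpa only [sub_add_cancel, zero_add] using hsub.add
    (tendsto_expansion ha (Complex.exp (3 * t * Complex.I)))

lemma ampShift_sub_one_isBigO (ha : a < 2 / 3) (hM : 5 * π / 4 < M) (κ₁ κ₂ : ℝ) {n : ℕ}
    (hn : 3 ≤ n) (hn' : n ≤ 5) :
    (fun p => ampShift κ₁ κ₂ p.1 p.2 - 1) =O[rayFilter a M] errorScale n := by
  have hpi : π / 6 ≤ π / 2 := by linarith [Real.pi_pos]
  have hA := (airyAmp_sub_expansion_isBigO ha hM le_rfl hpi κ₁ hn hn').mul
    ((tendsto_airyAmp_airyArg_logShift ha hM hpi le_rfl κ₂).isBigO_one ℝ)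
  have hB := ((tendsto_expansion ha (Complex.exp (3 * (π / 6 : ℝ) * Complex.I))).isBigO_one ℝ).mul
    (airyAmp_sub_expansion_isBigO ha hM hpi le_rfl κ₂ hn hn')
  simp only [mul_one, one_mul, cexp_three_pi_div_two_mul_I, cexp_three_pi_div_six_mul_I] at hA hB
  refine ((hA.add hB).sub ((expansionParam_sq_isBigO hn (by omega)).const_mul_left
    ((5 / 48 * Complex.I) ^ 2))).congr_left fun p => ?_
  rw [ampShift, ampProd]
  ring

lemma crossPhase_isBigO (ha : a < 2 / 3) (κ : ℝ) :
    (fun p => crossPhase κ p.1 p.2) =O[rayFilter a M] errorScale 3 := by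
  have hcube := (sqrtOneAdd_pow_three_sub_isBigO.comp_tendsto
    (tendsto_shiftRatio (M := M) ha κ)).trans ((shiftRatio_isBigO κ).pow 3)
  have hpre : (fun p : ℝ × ℂ => 4 * Complex.I / (3 * p.1) * Complex.exp (p.2 / 2) ^ 3)
      =O[rayFilter a M] fun p => p.1⁻¹ * (invSqrtAbs p.2)⁻¹ ^ 3 :=
    isBigO_of_le' (c := 4 / 3) _ fun p => by
      rw [norm_mul, norm_mul, norm_pow, norm_pow, norm_cexp_half, norm_div, norm_mul, norm_mul,
        Complex.norm_I, Complex.norm_real, norm_inv, norm_inv, Complex.norm_ofNat,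
        Complex.norm_ofNat, Real.norm_of_nonneg (invSqrtAbs_pos _).le]
      exact le_of_eq (by ring)
  refine ((hpre.mul hcube).congr' (Eventually.of_forall fun p => ?_) ?_).trans
    (sq_mul_invSqrtAbs_pow_isBigO le_rfl (by norm_num : 3 ≤ 3 + 3))
  · exact mul_assoc _ _ _
  · filter_upwards [eventually_fst_pos] with p hf
    have hy := (invSqrtAbs_pos p.2).ne'
    field_simp

lemma cexp_crossPhase_sub_one_isBigO (ha : a < 2 / 3) (κ : ℝ) :
    (fun p => Complex.exp (crossPhase κ p.1 p.2) - 1) =O[rayFilter a M] errorScale 3 := by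
  have hphase := crossPhase_isBigO (M := M) ha κ
  have hexp := (Complex.hasDerivAt_exp 0).isBigO_sub.comp_tendsto
    (hphase.trans_tendsto (tendsto_errorScale_three ha))
  simp only [Function.comp_def, Complex.exp_zero, sub_zero] at hexp
  exact hexp.trans hphase

lemma inv_sqrtOneAdd_mul_ampShift_add_sub_two_isBigO (ha : a < 2 / 3) (hM : 5 * π / 4 < M)
    (κ : ℝ) :
    (fun p => (sqrtOneAdd (shiftRatio κ p.1 p.2))⁻¹ * ampShift κ κ p.1 p.2 +
      (sqrtOneAdd (-shiftRatio κ p.1 p.2))⁻¹ * ampShift (-κ) (-κ) p.1 p.2 - 2)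
      =O[rayFilter a M] errorScale 4 := by
  have hk := tendsto_shiftRatio (M := M) ha κ
  have hu := (((tendsto_sqrtOneAdd.comp hk).inv₀ one_ne_zero).isBigO_one ℝ).mul
    (ampShift_sub_one_isBigO ha hM κ κ (by norm_num : 3 ≤ 4) (by norm_num))
  have hv := (((tendsto_sqrtOneAdd_neg.comp hk).inv₀ one_ne_zero).isBigO_one ℝ).mul
    (ampShift_sub_one_isBigO ha hM (-κ) (-κ) (by norm_num : 3 ≤ 4) (by norm_num))
  have hsum := (sqrtOneAdd_inv_add_inv_sub_two_isBigO.comp_tendsto hk).trans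
    (shiftRatio_sq_isBigO κ (by norm_num : 4 ≤ 4) (by norm_num))
  simp only [one_mul, Function.comp_apply] at hu hv
  refine ((hu.add hv).add hsum).congr_left fun p => ?_
  simp only [Function.comp_apply]
  ring

lemma inv_sqrtOneAdd_mul_inv_sub_one_isBigO (ha : a < 2 / 3) (κ : ℝ) :
    (fun p => (sqrtOneAdd (shiftRatio κ p.1 p.2))⁻¹ * (sqrtOneAdd (-shiftRatio κ p.1 p.2))⁻¹ - 1)
      =O[rayFilter a M] errorScale 3 :=
  (sqrtOneAdd_inv_mul_inv_sub_one_isBigO.comp_tendsto (tendsto_shiftRatio ha κ)).trans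
    (shiftRatio_sq_isBigO κ (by norm_num) (by norm_num))

lemma inv_sqrtOneAdd_mul_ampShift_mul_sub_one_isBigO (ha : a < 2 / 3) (hM : 5 * π / 4 < M)
    (κ : ℝ) :
    (fun p => (sqrtOneAdd (shiftRatio κ p.1 p.2))⁻¹ * ampShift κ κ p.1 p.2 *
      ((sqrtOneAdd (-shiftRatio κ p.1 p.2))⁻¹ * ampShift (-κ) (-κ) p.1 p.2) - 1)
      =O[rayFilter a M] errorScale 3 := by
  have hone := (tendsto_errorScale_three (M := M) ha).isBigO_one ℝ
  have hamp (κ : ℝ) := ampShift_sub_one_isBigO ha hM κ κ le_rfl (by norm_num : 3 ≤ 5)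
  refine (mul_sub_one_isBigO hone (inv_sqrtOneAdd_mul_inv_sub_one_isBigO ha κ)
    (mul_sub_one_isBigO hone (hamp κ) (hamp (-κ)))).congr_left fun p => ?_
  ring

lemma cexp_crossPhase_mul_ampShift_sub_one_isBigO (ha : a < 2 / 3) (hM : 5 * π / 4 < M)
    (κ : ℝ) :
    (fun p => (sqrtOneAdd (shiftRatio κ p.1 p.2))⁻¹ * (sqrtOneAdd (-shiftRatio κ p.1 p.2))⁻¹ *
      (Complex.exp (crossPhase κ p.1 p.2) * ampShift κ (-κ) p.1 p.2 ^ 2) - 1)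
      =O[rayFilter a M] errorScale 3 := by
  have hone := (tendsto_errorScale_three (M := M) ha).isBigO_one ℝ
  have hamp := ampShift_sub_one_isBigO ha hM κ (-κ) le_rfl (by norm_num : 3 ≤ 5)
  have hsq := mul_sub_one_isBigO hone hamp hamp
  simp only [← sq] at hsq
  exact mul_sub_one_isBigO hone (inv_sqrtOneAdd_mul_inv_sub_one_isBigO ha κ)
    (mul_sub_one_isBigO hone (cexp_crossPhase_sub_one_isBigO ha κ) hsq)

lemma norm_cexp_four_mul_le_one {κ : ℝ} (hκ : 0 ≤ κ) {m : ℂ} (h₀ : 0 ≤ m.im)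
    (h₁ : m.im ≤ 2 * π) :
    ‖Complex.exp (4 * Complex.I * κ * Complex.exp (m / 2))‖ ≤ 1 := by
  have him : 0 ≤ (Complex.exp (m / 2)).im := by
    rw [Complex.exp_im, Complex.div_ofNat_im]
    exact mul_nonneg (Real.exp_pos _).le
      (Real.sin_nonneg_of_nonneg_of_le_pi (by linarith) (by linarith))
  rw [Complex.norm_exp, Real.exp_le_one_iff]
  have hre : (4 * Complex.I * κ * Complex.exp (m / 2)).re =
      -(4 * κ * (Complex.exp (m / 2)).im) := by simp
  rw [hre]
  exact neg_nonpos.2 (by positivity)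

lemma eventually_im_mem_Icc (hM : 0 ≤ M) : ∀ᶠ p in rayFilter a M, p.2.im ∈ Set.Icc 0 (2 * π) := by
  filter_upwards [eventually_fst_pos, eventually_mem_rayRegion,
    tendsto_log_inv_add_exp.eventually_ge_atTop 0] with p hf hp hL
  have hy := invSqrtAbs_pos p.2
  refine ⟨le_trans (by positivity) hp.2.1.le, hp.2.2.le.trans ?_⟩
  have : 0 ≤ M * (p.1 * (invSqrtAbs p.2 ^ 2 + invSqrtAbs p.2 ^ 3) *
      Real.log (p.1⁻¹ + Real.exp p.2.re)) := by positivity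
  linarith [Real.pi_pos]

theorem Df_cexp_sub_isBigO {κ η : ℝ} (hκ : 0 ≤ κ) (hη : η ≠ 0) (ha : a < 2 / 3)
    (hM : 5 * π / 4 < M) :
    (fun p => Df κ η p.1 (Complex.exp p.2) -
      ((2 * η * Complex.exp (p.2 / 2) + Complex.I) ^ 2 +
        Complex.exp (4 * Complex.I * κ * Complex.exp (p.2 / 2))) /
          (4 * Complex.exp p.2 * η ^ 2)) =O[rayFilter a M] errorScale 5 := by
  have hk := tendsto_shiftRatio (M := M) ha κ
  have hbounded : (fun p : ℝ × ℂ => Complex.exp (4 * Complex.I * κ * Complex.exp (p.2 / 2)))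
      =O[rayFilter a M] fun _ => (1 : ℝ) := by
    refine IsBigO.of_bound' ?_
    filter_upwards [eventually_im_mem_Icc (by linarith [Real.pi_pos])] with p hp
    simpa using norm_cexp_four_mul_le_one hκ hp.1 hp.2
  have hpre : (fun p : ℝ × ℂ => Complex.I / (2 * Complex.exp (p.2 / 2)) / η) =O[rayFilter a M]
      fun p => invSqrtAbs p.2 :=
    (inv_cexp_half_isBigO.const_mul_left (Complex.I / (2 * η))).congr_left fun p => by
      field_simp
  have hlin := hpre.mul (inv_sqrtOneAdd_mul_ampShift_add_sub_two_isBigO ha hM κ)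
  have hcross := hbounded.mul (cexp_crossPhase_mul_ampShift_sub_one_isBigO ha hM κ)
  simp only [one_mul] at hcross
  have hquad := (hpre.pow 2).mul
    ((inv_sqrtOneAdd_mul_ampShift_mul_sub_one_isBigO ha hM κ).sub hcross)
  simp only [sq (invSqrtAbs _), mul_assoc (invSqrtAbs _), invSqrtAbs_mul_errorScale] at hlin hquad
  refine (hlin.add hquad).congr' ?_ EventuallyEq.rfl
  filter_upwards [eventually_fst_pos, (hk.const_add 1).eventually_ne (by simp : (1 : ℂ) + 0 ≠ 0),
    (hk.const_sub 1).eventually_ne (by simp : (1 : ℂ) - 0 ≠ 0)] with p hf h h'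
  exact (Df_cexp_sub_eq hf hη h h').symm

end ErrorEstimates

section PolarCoordinates

open Filter Topology

variable {a M f r : ℝ}

lemma exists_forall_of_eventually_rayFilter {P : ℝ × ℂ → Prop} (h : ∀ᶠ p in rayFilter a M, P p) :
    ∃ f₀ > 0, ∀ p ∈ rayRegion a M, 0 < p.1 → p.1 < f₀ → P p := by
  rw [rayFilter, eventually_inf_principal, eventually_comap] at h
  obtain ⟨f₀, hf₀, hsub⟩ := mem_nhdsGT_iff_exists_Ioo_subset.1 h
  exact ⟨f₀, hf₀, fun p hp h₀ h₁ => hsub ⟨h₀, h₁⟩ p rfl hp⟩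

lemma cexp_log_add_mul_I (hr : 0 < r) (θ : ℝ) :
    Complex.exp (Real.log r + θ * Complex.I) = r * Complex.exp (Complex.I * θ) := by
  rw [Complex.exp_add, ← Complex.ofReal_exp, Real.exp_log hr, mul_comm Complex.I]

lemma cexp_half_log_add_mul_I (hr : 0 < r) (θ : ℝ) :
    Complex.exp ((Real.log r + θ * Complex.I) / 2) =
      (r ^ ((1 : ℝ) / 2) : ℝ) * Complex.exp (Complex.I * θ / 2) := by
  rw [add_div, Complex.exp_add, Real.rpow_def_of_pos hr, Complex.ofReal_exp, mul_comm Complex.I]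
  push_cast
  ring_nf

lemma invSqrtAbs_log_add_mul_I_pow (hr : 0 < r) (θ : ℝ) (n : ℕ) :
    invSqrtAbs (Real.log r + θ * Complex.I) ^ n = r ^ (-(n : ℝ) / 2) := by
  have hre : (Real.log r + θ * Complex.I : ℂ).re = Real.log r := by simp
  rw [invSqrtAbs, hre, Real.rpow_def_of_pos hr, ← Real.exp_nat_mul]
  ring_nf

lemma log_add_mul_I_mem_rayRegion (hr : 0 < r) {θ : ℝ} (hfr : f ^ a < r)
    (hlow : r ^ (-(3 : ℝ) / 2) * M * f * Real.log (f⁻¹ + r) < θ)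
    (hup : θ < 4 * π / 3 - (1 + r ^ (-(1 : ℝ) / 2)) * r⁻¹ * M * f * Real.log (f⁻¹ + r)) :
    (f, (Real.log r + θ * Complex.I : ℂ)) ∈ rayRegion a M := by
  have hpow := invSqrtAbs_log_add_mul_I_pow hr θ
  have hre : Real.exp (Real.log r + θ * Complex.I : ℂ).re = r := by simp [Real.exp_log hr]
  have him : (Real.log r + θ * Complex.I : ℂ).im = θ := by simp
  have h₂ : r ^ (-((2 : ℕ) : ℝ) / 2) = r⁻¹ := by norm_num [Real.rpow_neg_one]
  have h₃ : r ^ (-((3 : ℕ) : ℝ) / 2) = r ^ (-(1 : ℝ) / 2) * r⁻¹ := by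
    rw [← Real.rpow_neg_one r, ← Real.rpow_add hr]
    norm_num
  simp only [rayRegion, Set.mem_ofPred_eq, hre, him]
  refine ⟨hfr, ?_, ?_⟩
  · rw [hpow 3]
    push_cast
    linarith
  · rw [hpow 2, hpow 3, h₂, h₃]
    linarith

lemma norm_errorScale_five (hr : 0 < r) (θ : ℝ) :
    ‖errorScale 5 (f, (Real.log r + θ * Complex.I : ℂ))‖ =
      f ^ 2 * r ^ (-(5 : ℝ) / 2) * (1 + r ^ (-(3 : ℝ) / 2)) := by
  rw [errorScale, invSqrtAbs_log_add_mul_I_pow hr, invSqrtAbs_log_add_mul_I_pow hr,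
    Real.norm_of_nonneg (by positivity), mul_assoc, mul_one_add, ← Real.rpow_add hr]
  norm_num

end PolarCoordinates

theorem stmt10_general (κ η : ℝ) (hκ : 0 ≤ κ) (hη : η ≠ 0) (a M : ℝ)
    (ha : a < 2 / 3) (hM : 5 * π / 4 < M) :
    ∃ f₀ > (0 : ℝ), ∃ C > (0 : ℝ), ∀ f : ℝ, 0 < f → f < f₀ → ∀ r θ : ℝ,
      f ^ a < r →
      r ^ (-(3 : ℝ) / 2) * M * f * Real.log (f⁻¹ + r) < θ →
      θ < 4 * π / 3 - (1 + r ^ (-(1 : ℝ) / 2)) * r⁻¹ * M * f * Real.log (f⁻¹ + r) →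
      norm (Df κ η f ((r : ℂ) * Complex.exp (Complex.I * θ)) -
          ((2 * η * (((r ^ ((1 : ℝ) / 2) : ℝ) : ℂ) * Complex.exp (Complex.I * θ / 2))
              + Complex.I) ^ 2
            + Complex.exp (4 * Complex.I * κ *
                (((r ^ ((1 : ℝ) / 2) : ℝ) : ℂ) * Complex.exp (Complex.I * θ / 2))))
            / (4 * ((r : ℂ) * Complex.exp (Complex.I * θ)) * η ^ 2)) ≤
        C * f ^ 2 * r ^ (-(5 : ℝ) / 2) * (1 + r ^ (-(3 : ℝ) / 2)) := by
  obtain ⟨C, hC, hbound⟩ := (Df_cexp_sub_isBigO hκ hη ha hM).exists_pos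
  obtain ⟨f₀, hf₀, hforall⟩ := exists_forall_of_eventually_rayFilter hbound.bound
  refine ⟨f₀, hf₀, C, hC, fun f hf hff₀ r θ hfr hlow hup => ?_⟩
  have hr : 0 < r := (Real.rpow_pos_of_pos hf a).trans hfr
  have h := hforall _ (log_add_mul_I_mem_rayRegion hr hfr hlow hup) hf hff₀
  rw [norm_errorScale_five hr, ← mul_assoc, ← mul_assoc] at h
  simpa only [cexp_log_add_mul_I hr, cexp_half_log_add_mul_I hr] using h

/-- Approximation of `D_f` by `F₂(z) = ((2η√z + i)² + e^{4iκ√z})/(4zη²)` in the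
region between the critical rays, with error `O(f²·r^{−5/2}(1 + r^{−3/2}))`;
the square root is taken with the branch `z^{1/2} = r^{1/2}e^{iθ/2}`. -/
theorem stmt10 (κ η : ℝ) (hκ : 0 < κ) (hη : 0 < η) (a M : ℝ)
    (ha0 : 0 < a) (ha1 : a < 1 / 2) (hM : 20 < M) :
    ∃ f₀ > (0 : ℝ), ∃ C > (0 : ℝ), ∀ f : ℝ, 0 < f → f < f₀ → ∀ r θ : ℝ,
      f ^ a < r →
      r ^ (-(3 : ℝ) / 2) * M * f * Real.log (f⁻¹ + r) < θ →
      θ < 4 * π / 3 - (1 + r ^ (-(1 : ℝ) / 2)) * r⁻¹ * M * f * Real.log (f⁻¹ + r) →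
      norm (Df κ η f ((r : ℂ) * Complex.exp (Complex.I * θ)) -
          ((2 * η * (((r ^ ((1 : ℝ) / 2) : ℝ) : ℂ) * Complex.exp (Complex.I * θ / 2))
              + Complex.I) ^ 2
            + Complex.exp (4 * Complex.I * κ *
                (((r ^ ((1 : ℝ) / 2) : ℝ) : ℂ) * Complex.exp (Complex.I * θ / 2))))
            / (4 * ((r : ℂ) * Complex.exp (Complex.I * θ)) * η ^ 2)) ≤
        C * f ^ 2 * r ^ (-(5 : ℝ) / 2) * (1 + r ^ (-(3 : ℝ) / 2)) := by
  exact stmt10_general κ η hκ.le hη.ne' a M (by linarith) (by linarith [Real.pi_le_four])
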